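/- arXiv:1402.6957 — 3 statements merged into one kernel-verified Lean document; each statement's English description precedes it below -/
import Mathlib

section
/- Let R be a ring and let {U_i : i ∈ I} and {V_j : j ∈ J} be two families of nonzero uniserial right R-modules. Let I' be the set of all indices i ∈ I with U_i quasismall and J' the set of all j ∈ J with V_j quasismall. Then ⨁_{i∈I} U_i ≅ ⨁_{j∈J} V_j if and only if there exist a bijection σ : I → J such that U_i and V_{σ(i)} belong to the same monogeny class for every i ∈ I, and a bijection τ : I' → J' such that U_i and V_{τ(i)} belong to the same epigeny class for every i ∈ I'. -/
universe u v w

/-- Two modules belong to the same monogeny class if there are injective homomorphisms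
in both directions. -/
def SameMonogenyClass (R : Type*) [Ring R] (M N : Type*) [AddCommGroup M] [Module R M]
    [AddCommGroup N] [Module R N] : Prop :=
  (∃ f : M →ₗ[R] N, Function.Injective f) ∧ ∃ g : N →ₗ[R] M, Function.Injective g

/-- Two modules belong to the same epigeny class if there are surjective homomorphisms
in both directions. -/
def SameEpigenyClass (R : Type*) [Ring R] (M N : Type*) [AddCommGroup M] [Module R M]
    [AddCommGroup N] [Module R N] : Prop :=
  (∃ f : M →ₗ[R] N, Function.Surjective f) ∧ ∃ g : N →ₗ[R] M, Function.Surjective g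

/-- A module is uniserial if its lattice of submodules is linearly ordered by inclusion. -/
def IsUniserialModule (R : Type*) [Ring R] (M : Type*) [AddCommGroup M] [Module R M] : Prop :=
  ∀ N P : Submodule R M, N ≤ P ∨ P ≤ N

/-- `N` is (isomorphic to) a direct summand of `X` iff the identity of `N` factors
through `X`. -/
def IsDirectSummandOf (R : Type*) [Ring R] (N X : Type*) [AddCommGroup N] [Module R N]
    [AddCommGroup X] [Module R X] : Prop :=
  ∃ (f : N →ₗ[R] X) (g : X →ₗ[R] N), g.comp f = LinearMap.id

/-- A module `N` is quasismall if whenever `N` is isomorphic to a direct summand of a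
direct sum `⨁_{k ∈ K} M k`, it is already isomorphic to a direct summand of a finite
subsum `⨁_{k ∈ F} M k`. -/
def IsQuasismall (R : Type u) [Ring R] (N : Type v) [AddCommGroup N] [Module R N] : Prop :=
  ∀ (K : Type w) (M : K → Type w) (_ : ∀ k, AddCommGroup (M k)) (_ : ∀ k, Module R (M k)),
    IsDirectSummandOf R N (DirectSum K M) →
      ∃ F : Finset K, IsDirectSummandOf R N (DirectSum {k // k ∈ F} (fun k => M k))

/-! ### Homomorphisms between uniserial modules -/

section Uniserial

variable {R : Type*} [Ring R] {M N P : Type*} [AddCommGroup M] [Module R M]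
  [AddCommGroup N] [Module R N] [AddCommGroup P] [Module R P]

theorem IsUniserialModule.of_injective (hN : IsUniserialModule R N) (f : M →ₗ[R] N)
    (hf : Function.Injective f) : IsUniserialModule R M := fun A B =>
  (hN (A.map f) (B.map f)).imp (Submodule.map_le_map_iff_of_injective hf _ _).1
    (Submodule.map_le_map_iff_of_injective hf _ _).1

theorem IsUniserialModule.exists_smul_eq_or (hM : IsUniserialModule R M) (x y : M) :
    (∃ r : R, r • x = y) ∨ ∃ r : R, r • y = x := by
  rcases hM (R ∙ x) (R ∙ y) with h | h
  · exact Or.inr (Submodule.mem_span_singleton.1 (h (Submodule.mem_span_singleton_self x)))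
  · exact Or.inl (Submodule.mem_span_singleton.1 (h (Submodule.mem_span_singleton_self y)))

theorem IsUniserialModule.exists_common_multiple (hM : IsUniserialModule R M) (x y : M) :
    ∃ z : M, (∃ r : R, r • z = x) ∧ ∃ r : R, r • z = y := by
  rcases hM.exists_smul_eq_or x y with h | h
  · exact ⟨x, ⟨1, one_smul _ _⟩, h⟩
  · exact ⟨y, h, ⟨1, one_smul _ _⟩⟩

/-- An element outside a submodule generates every element of that submodule. -/
theorem IsUniserialModule.exists_smul_eq_of_notMem (hM : IsUniserialModule R M)
    {A : Submodule R M} {x y : M} (hx : x ∉ A) (hy : y ∈ A) : ∃ r : R, r • x = y := by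
  rcases hM.exists_smul_eq_or x y with h | ⟨r, rfl⟩
  · exact h
  · exact absurd (A.smul_mem r hy) hx

theorem IsUniserialModule.injective_or_of_add (hM : IsUniserialModule R M) {f g : M →ₗ[R] N}
    (h : Function.Injective (f + g)) : Function.Injective f ∨ Function.Injective g := by
  simp only [← LinearMap.ker_eq_bot] at h ⊢
  have key : LinearMap.ker f ⊓ LinearMap.ker g = ⊥ := by
    refine eq_bot_iff.2 fun x hx => ?_
    have hx' : f x = 0 ∧ g x = 0 := by simpa using hx
    rw [← h, LinearMap.mem_ker, LinearMap.add_apply, hx'.1, hx'.2, add_zero]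
  rcases hM (LinearMap.ker f) (LinearMap.ker g) with h' | h'
  · left; rwa [inf_eq_left.2 h'] at key
  · right; rwa [inf_eq_right.2 h'] at key

theorem IsUniserialModule.surjective_or_of_add (hN : IsUniserialModule R N) {f g : M →ₗ[R] N}
    (h : Function.Surjective (f + g)) : Function.Surjective f ∨ Function.Surjective g := by
  simp only [← LinearMap.range_eq_top] at h ⊢
  have key : LinearMap.range f ⊔ LinearMap.range g = ⊤ := by
    refine eq_top_iff.2 fun x _ => ?_
    have hx : x ∈ LinearMap.range (f + g) := h ▸ Submodule.mem_top
    obtain ⟨y, rfl⟩ := hx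
    exact Submodule.add_mem_sup ⟨y, rfl⟩ ⟨y, rfl⟩
  rcases hN (LinearMap.range f) (LinearMap.range g) with h' | h'
  · right; rwa [sup_eq_right.2 h'] at key
  · left; rwa [sup_eq_left.2 h'] at key

theorem IsUniserialModule.exists_surjective_of_sum [Nontrivial N] (hN : IsUniserialModule R N)
    {K : Type*} {h : K → M →ₗ[R] N} {s : Finset K}
    (hs : Function.Surjective (∑ k ∈ s, h k : M →ₗ[R] N)) : ∃ k ∈ s, Function.Surjective (h k) := by
  classical
  induction s using Finset.induction_on with
  | empty =>
    obtain ⟨x, hx⟩ := exists_ne (0 : N)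
    obtain ⟨y, hy⟩ := hs x
    simp at hy
    exact absurd hy.symm hx
  | insert a s ha ih =>
    rw [Finset.sum_insert ha] at hs
    rcases hN.surjective_or_of_add hs with h' | h'
    · exact ⟨a, by simp, h'⟩
    · obtain ⟨k, hk, hk'⟩ := ih h'
      exact ⟨k, by simp [hk], hk'⟩

theorem IsUniserialModule.injective_left_of_comp [Nontrivial M] (hN : IsUniserialModule R N)
    {f : M →ₗ[R] N} {g : N →ₗ[R] P} (h : Function.Injective (g.comp f)) :
    Function.Injective g := by
  have hf : Function.Injective f := Function.Injective.of_comp (f := g) (by simpa using h)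
  rcases hN (LinearMap.ker g) (LinearMap.range f) with h' | h'
  · rw [← LinearMap.ker_eq_bot, eq_bot_iff]
    intro x hx
    obtain ⟨y, rfl⟩ := h' hx
    have : y = 0 := h (by simpa using hx)
    simp [this]
  · obtain ⟨x, hx⟩ := exists_ne (0 : M)
    have := h' ⟨x, rfl⟩
    exact absurd (h (by simpa using this)) hx

theorem IsUniserialModule.surjective_right_of_comp [Nontrivial P] (hN : IsUniserialModule R N)
    {f : M →ₗ[R] N} {g : N →ₗ[R] P} (h : Function.Surjective (g.comp f)) :
    Function.Surjective f := by
  rcases hN (LinearMap.ker g) (LinearMap.range f) with h' | h'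
  · intro y
    obtain ⟨x, hx⟩ := h (g y)
    have : y - f x ∈ LinearMap.range f := h' (by simp at hx; simp [hx])
    obtain ⟨z, hz⟩ := this
    exact ⟨z + x, by simp [hz]⟩
  · obtain ⟨z, hz⟩ := exists_ne (0 : P)
    obtain ⟨x, hx⟩ := h z
    have : f x ∈ LinearMap.ker g := h' ⟨x, rfl⟩
    exact absurd (hx.symm.trans this) hz

theorem Function.Injective.linearMap_neg {f : M →ₗ[R] N} (hf : Function.Injective (-f)) :
    Function.Injective f := fun x y h => hf (by simp [h])

theorem Function.Surjective.linearMap_neg {f : M →ₗ[R] N} (hf : Function.Surjective (-f)) :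
    Function.Surjective f := fun y => by
  obtain ⟨x, hx⟩ := hf (-y)
  exact ⟨x, by simpa using hx⟩

theorem IsUniserialModule.bijective_add (hM : IsUniserialModule R M) (hN : IsUniserialModule R N)
    {f g : M →ₗ[R] N} (hf : Function.Injective f) (hf' : ¬ Function.Surjective f)
    (hg : Function.Surjective g) (hg' : ¬ Function.Injective g) :
    Function.Bijective (f + g) := by
  constructor
  · refine (hM.injective_or_of_add (f := f + g) (g := -g) (by simpa using hf)).resolve_right ?_
    exact fun h => hg' h.linearMap_neg
  · refine (hN.surjective_or_of_add (f := f + g) (g := -f) (by simpa using hg)).resolve_right ?_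
    exact fun h => hf' h.linearMap_neg

/-- If one map is injective and another one surjective, some map is bijective. -/
theorem IsUniserialModule.nonempty_linearEquiv (hM : IsUniserialModule R M)
    (hN : IsUniserialModule R N) {f g : M →ₗ[R] N} (hf : Function.Injective f)
    (hg : Function.Surjective g) : Nonempty (M ≃ₗ[R] N) := by
  by_cases hf' : Function.Surjective f
  · exact ⟨LinearEquiv.ofBijective f ⟨hf, hf'⟩⟩
  by_cases hg' : Function.Injective g
  · exact ⟨LinearEquiv.ofBijective g ⟨hg', hg⟩⟩
  exact ⟨LinearEquiv.ofBijective _ (hM.bijective_add hN hf hf' hg hg')⟩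

theorem IsUniserialModule.surjective_id_sub [Nontrivial M] (hM : IsUniserialModule R M)
    {s : M →ₗ[R] M} (hs : ¬ Function.Surjective s) :
    Function.Surjective (LinearMap.id - s : M →ₗ[R] M) :=
  (hM.surjective_or_of_add (f := LinearMap.id - s) (g := s)
    (by simpa using Function.surjective_id)).resolve_right hs

/-- A map from a uniserial module that does not kill a nonzero element because it fixes
its image is injective. -/
theorem IsUniserialModule.injective_of_forall_smul (hM : IsUniserialModule R M)
    {f : M →ₗ[R] N} {x : M} (hx : x ≠ 0) (h : ∀ r : R, f (r • x) = 0 → r • x = 0) :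
    Function.Injective f := by
  rw [← LinearMap.ker_eq_bot]
  by_contra hne
  obtain ⟨y, hy, hy0⟩ := Submodule.exists_mem_ne_zero_of_ne_bot hne
  rcases hM.exists_smul_eq_or x y with ⟨r, rfl⟩ | ⟨r, rfl⟩
  · exact hy0 (h r hy)
  · have h1 : f ((1 : R) • r • y) = 0 := by
      rw [one_smul, map_smul, LinearMap.mem_ker.1 hy, smul_zero]
    exact hx (by simpa using h 1 h1)

theorem IsUniserialModule.injective_of_apply_eq_self (hM : IsUniserialModule R M)
    {f : M →ₗ[R] M} {x : M} (hx : x ≠ 0) (h : f x = x) : Function.Injective f :=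
  hM.injective_of_forall_smul hx fun r hr => by rwa [map_smul, h] at hr

/-- Finitely many noninjective maps have a common nonzero multiple of `x` in their kernels. -/
theorem IsUniserialModule.exists_smul_ne_zero_forall_eq_zero (hM : IsUniserialModule R M)
    {K : Type*} (s : Finset K) {Q : K → Type*} [∀ k, AddCommGroup (Q k)] [∀ k, Module R (Q k)]
    (f : ∀ k, M →ₗ[R] Q k) (hf : ∀ k ∈ s, ¬ Function.Injective (f k)) {x : M} (hx : x ≠ 0) :
    ∃ r : R, r • x ≠ 0 ∧ ∀ k ∈ s, f k (r • x) = 0 := by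
  classical
  induction s using Finset.induction_on with
  | empty => exact ⟨1, by simpa using hx, by simp⟩
  | insert a s ha ih =>
    obtain ⟨r, hr, h⟩ := ih fun k hk => hf k (by simp [hk])
    have : ∃ t : R, t • r • x ≠ 0 ∧ f a (t • r • x) = 0 := by
      by_contra hcon
      push Not at hcon
      exact hf a (by simp) (hM.injective_of_forall_smul hr fun t ht =>
        by_contra fun h0 => hcon t h0 ht)
    obtain ⟨t, ht, hta⟩ := this
    refine ⟨t * r, by rwa [mul_smul], ?_⟩
    intro k hk
    rw [mul_smul]
    rcases Finset.mem_insert.1 hk with rfl | hk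
    · exact hta
    · rw [map_smul, h k hk, smul_zero]

end Uniserial

/-! ### Bundled nonzero uniserial modules -/

/-- A nonzero uniserial module. -/
structure UniserialModule (R : Type u) [Ring R] where
  /-- The underlying type. -/
  carrier : Type w
  [addCommGroup : AddCommGroup carrier]
  [module : Module R carrier]
  [nontrivial : Nontrivial carrier]
  uniserial : IsUniserialModule R carrier

namespace UniserialModule

variable {R : Type u} [Ring R]

instance : CoeSort (UniserialModule.{u, w} R) (Type w) := ⟨carrier⟩

attribute [instance] addCommGroup module nontrivial

/-- The relation of having the same monogeny class. -/
def Mono (U V : UniserialModule.{u, w} R) : Prop := SameMonogenyClass R U V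

/-- The relation of having the same epigeny class. -/
def Epi (U V : UniserialModule.{u, w} R) : Prop := SameEpigenyClass R U V

variable {U V W : UniserialModule.{u, w} R}

theorem Mono.refl (U : UniserialModule.{u, w} R) : U.Mono U :=
  ⟨⟨LinearMap.id, Function.injective_id⟩, ⟨LinearMap.id, Function.injective_id⟩⟩

theorem Mono.symm (h : U.Mono V) : V.Mono U := ⟨h.2, h.1⟩

theorem Mono.trans (h : U.Mono V) (h' : V.Mono W) : U.Mono W := by
  obtain ⟨⟨f, hf⟩, ⟨g, hg⟩⟩ := h
  obtain ⟨⟨f', hf'⟩, ⟨g', hg'⟩⟩ := h'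
  exact ⟨⟨f'.comp f, hf'.comp hf⟩, ⟨g.comp g', hg.comp hg'⟩⟩

theorem Epi.refl (U : UniserialModule.{u, w} R) : U.Epi U :=
  ⟨⟨LinearMap.id, Function.surjective_id⟩, ⟨LinearMap.id, Function.surjective_id⟩⟩

theorem Epi.symm (h : U.Epi V) : V.Epi U := ⟨h.2, h.1⟩

theorem Epi.trans (h : U.Epi V) (h' : V.Epi W) : U.Epi W := by
  obtain ⟨⟨f, hf⟩, ⟨g, hg⟩⟩ := h
  obtain ⟨⟨f', hf'⟩, ⟨g', hg'⟩⟩ := h'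
  exact ⟨⟨f'.comp f, hf'.comp hf⟩, ⟨g.comp g', hg.comp hg'⟩⟩

theorem Mono.of_linearEquiv (e : U ≃ₗ[R] V) : U.Mono V :=
  ⟨⟨e.toLinearMap, e.injective⟩, ⟨e.symm.toLinearMap, e.symm.injective⟩⟩

theorem Epi.of_linearEquiv (e : U ≃ₗ[R] V) : U.Epi V :=
  ⟨⟨e.toLinearMap, e.surjective⟩, ⟨e.symm.toLinearMap, e.symm.surjective⟩⟩

theorem Mono.nonempty_linearEquiv (h : U.Mono V) (h' : U.Epi V) : Nonempty (U ≃ₗ[R] V) := by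
  obtain ⟨f, hf⟩ := h.1
  obtain ⟨g, hg⟩ := h'.1
  exact U.uniserial.nonempty_linearEquiv V.uniserial hf hg

end UniserialModule

/-! ### Maps into and out of direct sums -/

section DirectSumMaps

open DirectSum

variable {R : Type*} [Ring R] {M N : Type*} [AddCommGroup M] [Module R M]
  [AddCommGroup N] [Module R N]
  {K : Type*} {Q : K → Type*} [∀ k, AddCommGroup (Q k)] [∀ k, Module R (Q k)]

/-- A pointwise finite family of linear maps defines a map to the direct sum. -/
noncomputable def LinearMap.toDirectSum (f : ∀ k, M →ₗ[R] Q k)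
    (h : ∀ m, {k | f k m ≠ 0}.Finite) : M →ₗ[R] ⨁ k, Q k := by
  classical
  have key : ∀ m k, (DFinsupp.mk (h m).toFinset fun i => f i m : ⨁ k, Q k) k = f k m := by
    intro m k
    rw [DFinsupp.mk_apply]
    split_ifs with hk
    · rfl
    · simpa [eq_comm] using hk
  exact
    { toFun := fun m => DFinsupp.mk (h m).toFinset fun k => f k m
      map_add' := fun a b => by
        refine DFinsupp.ext fun k => ?_
        exact (key (a + b) k).trans ((map_add _ _ _).trans
          (congrArg₂ (· + ·) (key a k).symm (key b k).symm))
      map_smul' := fun r a => by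
        refine DFinsupp.ext fun k => ?_
        exact (key (r • a) k).trans ((map_smul _ _ _).trans
          (congrArg (r • ·) (key a k).symm)) }

@[simp]
theorem LinearMap.toDirectSum_apply (f : ∀ k, M →ₗ[R] Q k)
    (h : ∀ m, {k | f k m ≠ 0}.Finite) (m : M) (k : K) :
    LinearMap.toDirectSum f h m k = f k m := by
  classical
  change (DFinsupp.mk (h m).toFinset fun i => f i m : ⨁ k, Q k) k = f k m
  rw [DFinsupp.mk_apply]
  split_ifs with hk
  · rfl
  · simpa [eq_comm] using hk

theorem DirectSum.finite_setOf_ne_zero (x : ⨁ k, Q k) : {k | x k ≠ 0}.Finite := by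
  classical
  exact DFinsupp.finite_support x

theorem DirectSum.eq_sum_lof [DecidableEq K] (x : ⨁ k, Q k) (s : Finset K)
    (hs : ∀ k, x k ≠ 0 → k ∈ s) : x = ∑ k ∈ s, lof R K Q k (x k) := by
  classical
  refine DFinsupp.ext fun k => ?_
  rw [DFinsupp.finsetSum_apply]
  by_cases hk : k ∈ s
  · rw [Finset.sum_eq_single_of_mem k hk]
    · exact (DirectSum.of_eq_same (β := Q) k (x k)).symm
    · intro b _ hb
      exact DirectSum.of_eq_of_ne b k (x b) hb.symm
  · rw [Finset.sum_eq_zero]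
    · by_contra h
      exact hk (hs k h)
    · intro b hb
      exact DirectSum.of_eq_of_ne b k (x b) (fun h => hk (h ▸ hb))

theorem DirectSum.apply_eq_sum [DecidableEq K] (g : (⨁ k, Q k) →ₗ[R] N) (x : ⨁ k, Q k)
    (s : Finset K) (hs : ∀ k, x k ≠ 0 → k ∈ s) :
    g x = ∑ k ∈ s, g (lof R K Q k (x k)) := by
  conv_lhs => rw [DirectSum.eq_sum_lof (R := R) x s hs]
  rw [map_sum]

theorem IsDirectSummandOf.of_bijective {f : M →ₗ[R] N} {g : N →ₗ[R] M}
    (h : Function.Bijective (g.comp f)) : IsDirectSummandOf R M N := by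
  refine ⟨f, (LinearEquiv.ofBijective _ h).symm.toLinearMap.comp g, ?_⟩
  ext m
  exact (LinearEquiv.ofBijective _ h).symm_apply_apply m

end DirectSumMaps

/-! ### Uniserial modules that are not quasismall -/

namespace UniserialModule

open DirectSum

variable {R : Type u} [Ring R]

/-- A countably generated uniserial module each of whose elements is fixed by an endomorphism
that is not surjective. -/
def IsNonsmall (U : UniserialModule.{u, w} R) : Prop :=
  (∃ x : ℕ → U, ∀ y, ∃ n, ∃ r : R, r • x n = y) ∧
    ∀ y : U, ∃ s : U →ₗ[R] U, ¬ Function.Surjective s ∧ s y = y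

/-- An increasing and cofinal sequence of elements. -/
structure IsExhaustion {U : Type*} [AddCommGroup U] [Module R U] (x : ℕ → U) : Prop where
  mono : ∀ ⦃m n⦄, m ≤ n → x m ∈ R ∙ x n
  cofinal : ∀ y, ∃ n, y ∈ R ∙ x n

theorem exists_isExhaustion (U : UniserialModule.{u, w} R) (x : ℕ → U)
    (hx : ∀ y, ∃ n, ∃ r : R, r • x n = y) :
    ∃ y : ℕ → U, IsExhaustion (R := R) y ∧ ∀ n, x n ∈ R ∙ y n := by
  choose c hc₁ hc₂ using U.uniserial.exists_common_multiple
  let y : ℕ → U := fun n => Nat.rec (x 0) (fun n z => c z (x (n + 1))) n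
  have hy : ∀ n, y n ∈ R ∙ y (n + 1) := fun n =>
    Submodule.mem_span_singleton.2 (hc₁ (y n) (x (n + 1)))
  have hxy : ∀ n, x n ∈ R ∙ y n := by
    intro n
    cases n with
    | zero => exact Submodule.mem_span_singleton_self _
    | succ n => exact Submodule.mem_span_singleton.2 (hc₂ (y n) (x (n + 1)))
  refine ⟨y, ⟨fun m n hmn => ?_, fun z => ?_⟩, hxy⟩
  · have hmono : Monotone fun n => R ∙ y n :=
      monotone_nat_of_le_succ fun n => (Submodule.span_singleton_le_iff_mem _ _).2 (hy n)
    exact hmono hmn (Submodule.mem_span_singleton_self _)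
  · obtain ⟨n, r, rfl⟩ := hx z
    exact ⟨n, Submodule.smul_mem _ r (hxy n)⟩

theorem apply_eq_self_of_mem_span {U : Type*} [AddCommGroup U] [Module R U] {s : U →ₗ[R] U}
    {x y : U} (h : s x = x) (hy : y ∈ R ∙ x) : s y = y := by
  obtain ⟨r, rfl⟩ := Submodule.mem_span_singleton.1 hy
  rw [map_smul, h]

theorem IsNonsmall.not_isQuasismall {U : UniserialModule.{u, w} R} (hU : U.IsNonsmall) :
    ¬ IsQuasismall.{u, w, w} R U := by
  classical
  intro hq
  obtain ⟨⟨x, hx⟩, hs⟩ := hU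
  obtain ⟨y, hy, -⟩ := U.exists_isExhaustion x hx
  choose s hs hsy using hs
  have hsy' : ∀ {m n}, m ≤ n → s (y n) (y m) = y m := fun {m n} h =>
    apply_eq_self_of_mem_span (hsy (y n)) (hy.mono h)
  let h : ℕ → U →ₗ[R] U := fun n => Nat.casesOn n (s (y 0)) fun n => s (y (n + 1)) - s (y n)
  have hns : ∀ n, ¬ Function.Surjective (h n) := by
    intro n
    cases n with
    | zero => exact hs _
    | succ n =>
      intro hsurj
      have hsurj' : Function.Surjective (s (y (n + 1)) + -s (y n) : U →ₗ[R] U) := by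
        rwa [← sub_eq_add_neg]
      rcases U.uniserial.surjective_or_of_add hsurj' with h' | h'
      · exact hs _ h'
      · exact hs _ h'.linearMap_neg
  have hsum : ∀ n, ∑ k ∈ Finset.range (n + 1), h k = s (y n) := by
    intro n
    induction n with
    | zero => simp [h]
    | succ n ih => rw [Finset.sum_range_succ, ih]; simp [h]
  have hzero : ∀ u, ∃ n, ∀ m, n < m → h m u = 0 := by
    intro u
    obtain ⟨n, hn⟩ := hy.cofinal u
    obtain ⟨r, rfl⟩ := Submodule.mem_span_singleton.1 hn
    refine ⟨n, fun m hm => ?_⟩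
    obtain ⟨m, rfl⟩ := Nat.exists_eq_succ_of_ne_zero (Nat.ne_zero_of_lt hm)
    have h1 := hsy' (Nat.le_of_lt_succ hm)
    have h2 := hsy' hm.le
    simp only [Nat.succ_eq_add_one] at h2
    simp [h, h1, h2]
  have hz : ∀ n, ∃ z, z ∉ LinearMap.range (h n) := fun n => by
    have := hns n
    simpa [Function.Surjective] using this
  choose z hz using hz
  have hle : ∀ n u, h n u ∈ R ∙ z n := fun n u =>
    Submodule.mem_span_singleton.2 (U.uniserial.exists_smul_eq_of_notMem (hz n) ⟨u, rfl⟩)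
  let f : ∀ k : ULift.{w} ℕ, U →ₗ[R] (R ∙ z k.down) := fun k =>
    (h k.down).codRestrict _ (hle k.down)
  have hf : ∀ u, {k | f k u ≠ 0}.Finite := by
    intro u
    obtain ⟨n, hn⟩ := hzero u
    refine Set.Finite.subset ((Finset.range (n + 1)).map Equiv.ulift.symm.toEmbedding).finite_toSet
      fun k hk => ?_
    have : k.down < n + 1 := by
      by_contra hcon
      exact hk (Subtype.ext (hn _ (by omega)))
    exact Finset.mem_coe.2 (Finset.mem_map.2 ⟨k.down, Finset.mem_range.2 this, rfl⟩)
  have hdir : IsDirectSummandOf R U (⨁ k : ULift.{w} ℕ, (R ∙ z k.down : Submodule R U)) := by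
    refine ⟨LinearMap.toDirectSum f hf,
      toModule R _ _ fun k => (R ∙ z k.down).subtype, LinearMap.ext fun u => ?_⟩
    obtain ⟨n, hn⟩ := hy.cofinal u
    have hn' := apply_eq_self_of_mem_span (hsy (y n)) hn
    have hsup : ∀ k, LinearMap.toDirectSum f hf u k ≠ 0 →
        k ∈ (Finset.range (n + 1)).map Equiv.ulift.symm.toEmbedding := by
      intro k hk
      rw [LinearMap.toDirectSum_apply] at hk
      have : k.down < n + 1 := by
        by_contra hcon
        obtain ⟨m, hm⟩ := Nat.exists_eq_succ_of_ne_zero (n := k.down) (by omega)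
        have h1 := apply_eq_self_of_mem_span (hsy (y m))
          ((Submodule.span_singleton_le_iff_mem _ _).2 (hy.mono (show n ≤ m by omega)) hn)
        have h2 := apply_eq_self_of_mem_span (hsy (y (m + 1)))
          ((Submodule.span_singleton_le_iff_mem _ _).2 (hy.mono (show n ≤ m + 1 by omega)) hn)
        refine hk (Subtype.ext ?_)
        change h k.down u = 0
        rw [hm]
        simp [h, h1, h2]
      exact Finset.mem_map.2 ⟨k.down, Finset.mem_range.2 this, rfl⟩
    rw [LinearMap.comp_apply, DirectSum.apply_eq_sum _ _ _ hsup, Finset.sum_map]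
    simp only [toModule_lof, LinearMap.toDirectSum_apply]
    change ∑ k ∈ Finset.range (n + 1), h k u = u
    rw [← LinearMap.sum_apply, hsum, hn']
  obtain ⟨F, f', g', hfg⟩ := hq _ _ _ _ hdir
  have hid : ∀ u, ∑ k : {k // k ∈ F}, (g'.comp ((lof R _ _ k).comp
      ((component R _ _ k).comp f'))) u = u := by
    intro u
    have := DirectSum.apply_eq_sum g' (f' u) Finset.univ (by simp)
    conv_rhs => rw [← LinearMap.id_apply (R := R) u, ← hfg, LinearMap.comp_apply, this]
    rfl
  have hsurj : Function.Surjective (∑ k : {k // k ∈ F}, (g'.comp ((lof R _ _ k).comp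
      ((component R _ _ k).comp f'))) : U →ₗ[R] U) := fun u => ⟨u, by
    rw [LinearMap.sum_apply]; exact hid u⟩
  obtain ⟨k, -, hk⟩ := U.uniserial.exists_surjective_of_sum hsurj
  let t : (R ∙ z k.1.down : Submodule R U) →ₗ[R] U :=
    g'.comp (lof R {k // k ∈ F} (fun k => (R ∙ z k.1.down : Submodule R U)) k)
  have ht : Function.Surjective t := fun u => by
    obtain ⟨v, hv⟩ := hk u
    exact ⟨_, hv⟩
  let c : U := t ⟨z k.1.down, Submodule.mem_span_singleton_self _⟩
  refine hs c fun u => ⟨u, apply_eq_self_of_mem_span (hsy c) ?_⟩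
  obtain ⟨⟨v, hv⟩, rfl⟩ := ht u
  obtain ⟨r, rfl⟩ := Submodule.mem_span_singleton.1 hv
  refine Submodule.mem_span_singleton.2 ⟨r, ?_⟩
  rw [← map_smul]
  rfl

theorem isNonsmall_of_family (U : UniserialModule.{u, w} R) {K : Type*} (h : K → U →ₗ[R] U)
    (hns : ∀ k, ¬ Function.Surjective (h k)) (hfin : ∀ u, {k | h k u ≠ 0}.Finite)
    (hsum : ∀ u, ∑ k ∈ (hfin u).toFinset, h k u = u) : U.IsNonsmall := by
  classical
  let F : U → Finset K := fun u => (hfin u).toFinset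
  let s : U → U →ₗ[R] U := fun u => ∑ k ∈ F u, h k
  have hs : ∀ u, ¬ Function.Surjective (s u) := fun u hu => by
    obtain ⟨k, -, hk⟩ := U.uniserial.exists_surjective_of_sum hu
    exact hns k hk
  have hsu : ∀ u, s u u = u := fun u => by
    simpa [s] using hsum u
  refine ⟨?_, fun u => ⟨s u, hs u, hsu u⟩⟩
  have hz : ∀ u, ∃ z, z ∉ LinearMap.range (s u) := fun u => by
    have := hs u
    simpa [Function.Surjective] using this
  choose z hz using hz
  have hF : ∀ (r : R) (u : U), F (r • u) ⊆ F u := by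
    intro r u k hk
    simp only [F, Set.Finite.mem_toFinset, Set.mem_ofPred_eq, map_smul] at hk ⊢
    exact fun h0 => hk (by rw [h0, smul_zero])
  have hFz : ∀ u, F u ⊂ F (z u) := by
    intro u
    obtain ⟨r, hr⟩ := U.uniserial.exists_smul_eq_of_notMem (hz u) ⟨u, hsu u⟩
    refine lt_of_le_of_ne ?_ fun heq => hz u ?_
    · conv_lhs => rw [← hr]
      exact hF r _
    · refine ⟨z u, ?_⟩
      have : s u = s (z u) := by simp only [s, heq]
      rw [this, hsu]
  let x : ℕ → U := fun n => z^[n] 0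
  have hx : StrictMono fun n => (F (x n)).card := strictMono_nat_of_lt_succ fun n => by
    simp only [x, Function.iterate_succ', Function.comp_apply]
    exact Finset.card_lt_card (hFz _)
  refine ⟨x, fun y => ?_⟩
  by_contra hcon
  push Not at hcon
  have hy : ∀ n, (F (x n)).card ≤ (F y).card := by
    intro n
    rcases U.uniserial.exists_smul_eq_or (x n) y with ⟨r, hr⟩ | ⟨r, hr⟩
    · exact absurd hr (hcon n r)
    · rw [← hr]
      exact Finset.card_le_card (hF r y)
  have := hx.le_apply (x := (F y).card + 1)
  have := hy ((F y).card + 1)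
  omega

section Components

variable {K : Type*} [DecidableEq K] {M : K → Type*} [∀ k, AddCommGroup (M k)]
  [∀ k, Module R (M k)] {U : UniserialModule.{u, w} R} {f : U →ₗ[R] ⨁ k, M k}
  {g : (⨁ k, M k) →ₗ[R] U}

theorem exists_injective_component (hfg : ∀ u, g (f u) = u) :
    ∃ k, Function.Injective ((g.comp (lof R K M k)).comp ((component R K M k).comp f)) := by
  by_contra hcon
  push Not at hcon
  obtain ⟨x, hx⟩ := exists_ne (0 : U)
  obtain ⟨r, hr, h0⟩ := U.uniserial.exists_smul_ne_zero_forall_eq_zero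
    (DirectSum.finite_setOf_ne_zero (f x)).toFinset
    (fun k => (g.comp (lof R K M k)).comp ((component R K M k).comp f)) (fun k _ => hcon k) hx
  apply hr
  rw [← hfg (r • x), DirectSum.apply_eq_sum g (f (r • x))
    (DirectSum.finite_setOf_ne_zero (f x)).toFinset]
  · exact Finset.sum_eq_zero h0
  · intro k hk
    simp only [Set.Finite.mem_toFinset, Set.mem_ofPred_eq]
    rw [map_smul, DirectSum.smul_apply] at hk
    exact fun h0 => hk (by rw [h0, smul_zero])

theorem exists_surjective_component (hU : ¬ U.IsNonsmall) (hfg : ∀ u, g (f u) = u) :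
    ∃ k, Function.Surjective ((g.comp (lof R K M k)).comp ((component R K M k).comp f)) := by
  by_contra hcon
  push Not at hcon
  have he : ∀ k u, f u k = 0 →
      (g.comp (lof R K M k)).comp ((component R K M k).comp f) u = 0 := fun k u h => by
    change g (lof R K M k (f u k)) = 0
    rw [h, map_zero, map_zero]
  refine hU (U.isNonsmall_of_family _ hcon (fun u =>
    (DirectSum.finite_setOf_ne_zero (f u)).subset fun k hk h0 => hk (he k u h0)) fun u => ?_)
  conv_rhs => rw [← hfg u, DirectSum.apply_eq_sum g (f u)
    (DirectSum.finite_setOf_ne_zero (f u)).toFinset (by simp)]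
  refine Finset.sum_subset (fun k hk => ?_) fun k _ hk => by simpa using hk
  simp only [Set.Finite.mem_toFinset, Set.mem_ofPred_eq] at hk ⊢
  exact fun h0 => hk (he k u h0)

end Components

theorem isQuasismall_of_not_isNonsmall {U : UniserialModule.{u, w} R} (hU : ¬ U.IsNonsmall) :
    IsQuasismall.{u, w, w} R U := by
  classical
  intro K M _ _ ⟨f, g, hfg⟩
  let e : K → U →ₗ[R] U := fun k => (g.comp (lof R K M k)).comp ((component R K M k).comp f)
  have hbij : ∃ s : Finset K, Function.Bijective (∑ k ∈ s, e k : U →ₗ[R] U) := by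
    obtain ⟨k, hk⟩ : ∃ k, Function.Surjective (e k) :=
      exists_surjective_component hU (LinearMap.congr_fun hfg)
    obtain ⟨l, hl⟩ : ∃ k, Function.Injective (e k) :=
      exists_injective_component (LinearMap.congr_fun hfg)
    by_cases hk' : Function.Injective (e k)
    · exact ⟨{k}, by rw [Finset.sum_singleton]; exact ⟨hk', hk⟩⟩
    by_cases hl' : Function.Surjective (e l)
    · exact ⟨{l}, by rw [Finset.sum_singleton]; exact ⟨hl, hl'⟩⟩
    refine ⟨{l, k}, ?_⟩
    rw [Finset.sum_pair (by rintro rfl; exact hk' hl)]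
    exact U.uniserial.bijective_add U.uniserial hl hl' hk hk'
  obtain ⟨s, hs⟩ := hbij
  refine ⟨s, IsDirectSummandOf.of_bijective
    (f := LinearMap.toDirectSum (fun k : {k // k ∈ s} => (component R K M k.1).comp f)
      fun _ => Set.toFinite _)
    (g := toModule R {k // k ∈ s} U fun k => g.comp (lof R K M k.1)) ?_⟩
  convert hs
  ext u
  rw [LinearMap.comp_apply, DirectSum.apply_eq_sum _ _ Finset.univ (by simp),
    LinearMap.sum_apply]
  simp only [toModule_lof, LinearMap.toDirectSum_apply]
  exact Finset.sum_coe_sort s fun k => e k u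

theorem isQuasismall_iff (U : UniserialModule.{u, w} R) :
    IsQuasismall.{u, w, w} R U ↔ ¬ U.IsNonsmall :=
  ⟨fun h h' => h'.not_isQuasismall h, isQuasismall_of_not_isNonsmall⟩

end UniserialModule

/-! ### Monogeny and epigeny classes of modules that are not quasismall -/

theorem LinearMap.exists_comp_eq_of_ker_le {R M N P : Type*} [Ring R] [AddCommGroup M] [Module R M]
    [AddCommGroup N] [Module R N] [AddCommGroup P] [Module R P] {g : M →ₗ[R] N} {t : M →ₗ[R] P}
    (hg : Function.Surjective g) (h : LinearMap.ker g ≤ LinearMap.ker t) :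
    ∃ t' : N →ₗ[R] P, ∀ x, t' (g x) = t x := by
  refine ⟨((LinearMap.ker g).liftQ t h).comp (g.quotKerEquivOfSurjective hg).symm.toLinearMap,
    fun x => ?_⟩
  have : g x = g.quotKerEquivOfSurjective hg (Submodule.Quotient.mk x) := rfl
  rw [LinearMap.comp_apply, this, LinearEquiv.coe_coe, LinearEquiv.symm_apply_apply]
  rfl

namespace UniserialModule

variable {R : Type u} [Ring R]

theorem IsExhaustion.exists_glue {M N : Type*} [AddCommGroup M] [Module R M] [AddCommGroup N]
    [Module R N] {w : ℕ → M} (hw : IsExhaustion (R := R) w) (φ : ℕ → M →ₗ[R] N)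
    (h : ∀ n, φ (n + 1) (w n) = φ n (w n)) : ∃ ψ : M →ₗ[R] N, ∀ n, ψ (w n) = φ n (w n) := by
  have hφ : ∀ m n, n ≤ m → ∀ u ∈ R ∙ w n, φ m u = φ n u := by
    intro m n hnm
    induction m, hnm using Nat.le_induction with
    | base => intros; rfl
    | succ m hm ih =>
      intro u hu
      rw [← ih u hu]
      obtain ⟨r, rfl⟩ := Submodule.mem_span_singleton.1
        ((Submodule.span_singleton_le_iff_mem _ _).2 (hw.mono hm) hu)
      rw [map_smul, map_smul, h]
  choose c hc using hw.cofinal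
  have hcm : ∀ u m, c u ≤ m → φ m u = φ (c u) u := fun u m hm => hφ m _ hm u (hc u)
  let ψ : M →ₗ[R] N :=
    { toFun := fun u => φ (c u) u
      map_add' := fun a b => by
        have h1 := hcm a (c a + c b + c (a + b)) (by omega)
        have h2 := hcm b (c a + c b + c (a + b)) (by omega)
        have h3 := hcm (a + b) (c a + c b + c (a + b)) (by omega)
        rw [← h1, ← h2, ← h3, map_add]
      map_smul' := fun r a => by
        have h1 := hcm a (c a + c (r • a)) (by omega)
        have h3 := hcm (r • a) (c a + c (r • a)) (by omega)
        rw [← h1, ← h3, map_smul, RingHom.id_apply] }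
  refine ⟨ψ, fun n => ?_⟩
  change φ (c (w n)) (w n) = _
  rw [← hcm _ (c (w n) + n) (by omega)]
  exact hφ _ n (by omega) _ (Submodule.mem_span_singleton_self _)

variable {U V : UniserialModule.{u, w} R}

theorem not_surjective_zero : ¬ Function.Surjective (0 : U →ₗ[R] V) := fun h => by
  obtain ⟨x, hx⟩ := exists_ne (0 : V)
  obtain ⟨y, hy⟩ := h x
  exact hx hy.symm

theorem IsNonsmall.of_epi (hU : U.IsNonsmall) (h : U.Epi V) : V.IsNonsmall := by
  obtain ⟨⟨x, hx⟩, hs⟩ := hU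
  obtain ⟨⟨p, hp⟩, ⟨q, hq⟩⟩ := h
  refine ⟨⟨fun n => p (x n), fun y => ?_⟩, fun b => ?_⟩
  · obtain ⟨y, rfl⟩ := hp y
    obtain ⟨n, r, rfl⟩ := hx y
    exact ⟨n, r, by simp⟩
  rcases eq_or_ne b 0 with rfl | hb
  · exact ⟨0, not_surjective_zero, rfl⟩
  obtain ⟨c, rfl⟩ := (hp.comp hq) b
  obtain ⟨s, hs, hsc⟩ := hs (q c)
  have hker : LinearMap.ker (p.comp q) ≤ LinearMap.ker (p.comp (s.comp q)) := by
    intro y hy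
    obtain ⟨r, rfl⟩ := V.uniserial.exists_smul_eq_of_notMem (A := LinearMap.ker (p.comp q))
      (x := c) (fun h0 => hb h0) hy
    have h0 : r • p (q c) = 0 := by simpa using hy
    simp [hsc, h0]
  obtain ⟨t, ht⟩ := LinearMap.exists_comp_eq_of_ker_le (g := p.comp q) (hp.comp hq) hker
  refine ⟨t, fun hts => hs ?_, ?_⟩
  · have h1 : Function.Surjective (p.comp (s.comp q)) := by
      have := hts.comp (hp.comp hq)
      intro z
      obtain ⟨y, hy⟩ := this z
      exact ⟨y, (ht y).symm.trans hy⟩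
    have h2 := U.uniserial.surjective_right_of_comp h1
    exact Function.Surjective.of_comp (g := q) h2
  · have := ht c
    simp only [LinearMap.comp_apply, hsc] at this
    exact this

theorem IsNonsmall.exists_injective_apply_eq (hV : V.IsNonsmall) {f : V →ₗ[R] U}
    (hf : Function.Injective f) (h : V.Mono U) (x : V) :
    ∃ a : U →ₗ[R] V, Function.Injective a ∧ a (f x) = x := by
  obtain ⟨g, hg⟩ := h.2
  rcases eq_or_ne x 0 with rfl | hx
  · exact ⟨g, hg, by simp⟩
  have key : ∀ θ : V →ₗ[R] V, Function.Bijective (g.comp f + θ : V →ₗ[R] V) → θ x = 0 →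
      ∃ a : U →ₗ[R] V, Function.Injective a ∧ a (f x) = x := by
    intro θ hθ h0
    let E := LinearEquiv.ofBijective _ hθ
    refine ⟨E.symm.toLinearMap.comp g, E.symm.injective.comp hg, ?_⟩
    change E.symm (g (f x)) = x
    rw [LinearEquiv.symm_apply_eq]
    change g (f x) = g (f x) + θ x
    rw [h0, add_zero]
  by_cases hs : Function.Surjective (g.comp f)
  · exact key 0 (by rw [add_zero]; exact ⟨hg.comp hf, hs⟩) rfl
  obtain ⟨s, hs', hsx⟩ := hV.2 x
  have hθx : (LinearMap.id - s : V →ₗ[R] V) x = 0 := by simp [hsx]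
  refine key (LinearMap.id - s) (V.uniserial.bijective_add V.uniserial (hg.comp hf) hs
    (V.uniserial.surjective_id_sub hs') fun hinj => hx (hinj ?_)) hθx
  rw [hθx, map_zero]

theorem IsNonsmall.exists_surjective (hU : U.IsNonsmall) (hV : V.IsNonsmall) (h : U.Mono V) :
    ∃ φ : U →ₗ[R] V, Function.Surjective φ := by
  by_contra hcon
  push Not at hcon
  obtain ⟨f, hf⟩ := h.2
  obtain ⟨x, hx, -⟩ := V.exists_isExhaustion _ hV.1.choose_spec
  obtain ⟨y, hy, -⟩ := U.exists_isExhaustion _ hU.1.choose_spec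
  have step : ∀ (n : ℕ) (φw : (U →ₗ[R] V) × U), ∃ φw' : (U →ₗ[R] V) × U,
      φw'.1 φw.2 = φw.1 φw.2 ∧ φw.2 ∈ R ∙ φw'.2 ∧ y n ∈ R ∙ φw'.2 ∧
        x n ∈ R ∙ φw'.1 φw'.2 := by
    rintro n ⟨φ, w⟩
    have : ∃ v, v ∉ LinearMap.range φ := by simpa [Function.Surjective] using hcon φ
    obtain ⟨v₀, hv₀⟩ := this
    obtain ⟨v, ⟨r, hr⟩, ⟨r', hr'⟩⟩ := V.uniserial.exists_common_multiple v₀ (x n)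
    have hv : v ∉ LinearMap.range φ := fun hv => hv₀ (hr ▸ Submodule.smul_mem _ r hv)
    obtain ⟨a, -, ha⟩ := hV.exists_injective_apply_eq hf h.symm v
    obtain ⟨s, hs, hsw⟩ := hU.2 w
    obtain ⟨u, hu⟩ := U.uniserial.surjective_id_sub hs (f v)
    obtain ⟨w₁, hw₁, hw₂⟩ := U.uniserial.exists_common_multiple w (y n)
    obtain ⟨w', hw', hw₃⟩ := U.uniserial.exists_common_multiple w₁ u
    rw [← Submodule.mem_span_singleton] at hw₁ hw₂ hw' hw₃
    have hle : (R ∙ w₁) ≤ R ∙ w' := (Submodule.span_singleton_le_iff_mem _ _).2 hw'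
    let φ' : U →ₗ[R] V := φ + a.comp (LinearMap.id - s)
    refine ⟨⟨φ', w'⟩, ?_, hle hw₁, hle hw₂, ?_⟩
    · simp [φ', hsw]
    have hφu : φ' u = φ u + v := by
      simp only [φ', LinearMap.add_apply, LinearMap.comp_apply]
      rw [hu, ha]
    have hvu : v ∈ R ∙ φ' u := by
      have hnot : φ' u ∉ LinearMap.range φ := fun hmem => hv (by
        have := Submodule.sub_mem _ hmem (LinearMap.mem_range_self φ u)
        rwa [hφu, add_sub_cancel_left] at this)
      have h1 : φ u ∈ R ∙ φ' u := Submodule.mem_span_singleton.2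
        (V.uniserial.exists_smul_eq_of_notMem hnot (LinearMap.mem_range_self φ u))
      have := Submodule.sub_mem _ (Submodule.mem_span_singleton_self (φ' u)) h1
      rwa [hφu, add_sub_cancel_left, ← hφu] at this
    rw [← hr']
    obtain ⟨t, rfl⟩ := Submodule.mem_span_singleton.1 hw₃
    refine Submodule.smul_mem _ r' ?_
    rw [map_smul] at hvu
    exact (Submodule.span_singleton_smul_le R t (φ' w')) hvu
  choose F hF₁ hF₂ hF₃ hF₄ using step
  let st : ℕ → (U →ₗ[R] V) × U := fun n => Nat.rec (0, 0) (fun n p => F n p) n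
  let φ : ℕ → U →ₗ[R] V := fun n => (st (n + 1)).1
  let w : ℕ → U := fun n => (st (n + 1)).2
  have hw : IsExhaustion (R := R) w := by
    refine ⟨fun m n hmn => ?_, fun z => ?_⟩
    · have hmono : Monotone fun n => R ∙ w n :=
        monotone_nat_of_le_succ fun n => (Submodule.span_singleton_le_iff_mem _ _).2 (hF₂ _ _)
      exact hmono hmn (Submodule.mem_span_singleton_self _)
    · obtain ⟨n, hn⟩ := hy.cofinal z
      exact ⟨n, (Submodule.span_singleton_le_iff_mem _ _).2 (hF₃ n (st n)) hn⟩
  obtain ⟨ψ, hψ⟩ := hw.exists_glue φ fun n => hF₁ _ _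
  refine hcon ψ fun v => ?_
  obtain ⟨n, hn⟩ := hx.cofinal v
  have h1 : x n ∈ R ∙ ψ (w n) := by
    rw [hψ]
    exact hF₄ n (st n)
  have h2 : (R ∙ ψ (w n)) ≤ LinearMap.range ψ :=
    (Submodule.span_singleton_le_iff_mem _ _).2 (LinearMap.mem_range_self ψ _)
  exact h2 ((Submodule.span_singleton_le_iff_mem _ _).2 h1 hn)

theorem IsNonsmall.epi (hU : U.IsNonsmall) (hV : V.IsNonsmall) (h : U.Mono V) : U.Epi V :=
  ⟨hU.exists_surjective hV h, hV.exists_surjective hU h.symm⟩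

end UniserialModule

/-! ### Exchange of uniserial summands -/

namespace UniserialModule

variable {R : Type u} [Ring R]

theorem exists_exchange (D X Y : UniserialModule.{u, w} R) {a : Y →ₗ[R] D} {c : Y →ₗ[R] X}
    {f : D →ₗ[R] Y} {b : X →ₗ[R] Y} (ha : Function.Injective a) (hc : Function.Surjective c)
    (hf : Function.Injective f) (hb : Function.Surjective b)
    (h : Function.Bijective (f.comp a + b.comp c : Y →ₗ[R] Y)) :
    ∃ D' : UniserialModule.{u, w} R, D'.Mono X ∧ D'.Epi D ∧
      ∃ ψ : (D × X) ≃ₗ[R] (Y × D'), ∀ y, ψ (a y, c y) = (y, 0) := by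
  let m : D × X →ₗ[R] Y := f.coprod b
  let i : Y →ₗ[R] D × X := a.prod c
  let E : Y ≃ₗ[R] Y := LinearEquiv.ofBijective _ h
  have hE : ∀ y, m (i y) = E y := fun y => rfl
  let q : D × X →ₗ[R] D × X := LinearMap.id - i.comp (E.symm.toLinearMap.comp m)
  have hq : ∀ p, q p = p - i (E.symm (m p)) := fun p => rfl
  have hqm : ∀ p, q p ∈ LinearMap.ker m := fun p => by
    rw [LinearMap.mem_ker, hq, map_sub, hE, E.apply_symm_apply, sub_self]
  have hqi : ∀ y, q (i y) = 0 := fun y => by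
    rw [hq, hE, E.symm_apply_apply, sub_self]
  let pr : D × X →ₗ[R] LinearMap.ker m := q.codRestrict _ hqm
  have hpr : ∀ p, ((pr p : LinearMap.ker m) : D × X) = q p := fun p => rfl
  have hprk : ∀ p : LinearMap.ker m, pr p = p := fun p => Subtype.ext (by
    rw [hpr, hq, LinearMap.mem_ker.1 p.2, map_zero, map_zero, sub_zero])
  have hpri : ∀ y, pr (i y) = 0 := fun y => Subtype.ext (hqi y)
  have hmem : ∀ p : LinearMap.ker m, f p.1.1 + b p.1.2 = 0 := fun p => p.2
  let snd : LinearMap.ker m →ₗ[R] X := (LinearMap.snd R D X).comp (LinearMap.ker m).subtype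
  let fst : LinearMap.ker m →ₗ[R] D := (LinearMap.fst R D X).comp (LinearMap.ker m).subtype
  have hsnd : Function.Injective snd := by
    rw [injective_iff_map_eq_zero]
    intro p hp
    have h2 : p.1.2 = 0 := hp
    have h1 : p.1.1 = 0 := hf (by simpa [h2] using hmem p)
    exact Subtype.ext (Prod.ext h1 h2)
  have hfst : Function.Surjective fst := fun d => by
    obtain ⟨x, hx⟩ := hb (-f d)
    exact ⟨⟨(d, x), by simp [m, hx]⟩, rfl⟩
  have : Nontrivial (LinearMap.ker m) := hfst.nontrivial
  refine ⟨⟨LinearMap.ker m, X.uniserial.of_injective snd hsnd⟩, ⟨⟨snd, hsnd⟩,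
    ⟨pr.comp (LinearMap.inr R D X), ?_⟩⟩, ⟨⟨fst, hfst⟩, ⟨pr.comp (LinearMap.inl R D X), ?_⟩⟩,
    LinearEquiv.ofLinearMap ((E.symm.toLinearMap.comp m).prod pr)
      (i.coprod (LinearMap.ker m).subtype) ?_ ?_, ?_⟩
  · rw [injective_iff_map_eq_zero]
    intro x hx
    have h0 : q (0, x) = 0 := congrArg Subtype.val hx
    rw [hq] at h0
    have h1 : (0, x) = i (E.symm (m (0, x))) := sub_eq_zero.1 h0
    have h2 : E.symm (m (0, x)) = 0 := ha (by rw [map_zero]; exact (congrArg Prod.fst h1).symm)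
    rw [h2] at h1
    simpa using congrArg Prod.snd h1
  · intro p
    obtain ⟨y, hy⟩ := hc (-p.1.2)
    refine ⟨p.1.1 + a y, ?_⟩
    have h1 : LinearMap.inl R D X (p.1.1 + a y) = p.1 + i y := by
      refine Prod.ext rfl ?_
      change (0 : X) = p.1.2 + c y
      rw [hy, add_neg_cancel]
    rw [LinearMap.comp_apply, h1, map_add, hpri, hprk, add_zero]
  · refine LinearMap.ext fun ⟨y, p⟩ => ?_
    have h1 : m (i y + p.1) = E y := by
      rw [map_add, hE, LinearMap.mem_ker.1 p.2, add_zero]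
    have h2 : pr (i y + p.1) = p := by rw [map_add, hpri, hprk, zero_add]
    refine Prod.ext ?_ h2
    change E.symm (m (i y + p.1)) = y
    rw [h1, E.symm_apply_apply]
  · refine LinearMap.ext fun p => ?_
    change i (E.symm (m p)) + q p = p
    rw [hq, add_sub_cancel]
  · intro y
    refine Prod.ext ?_ (hpri y)
    change E.symm (m (i y)) = y
    rw [hE, E.symm_apply_apply]

variable {X X' Y Y' U V W : UniserialModule.{u, w} R}

theorem exists_fourth (h : Y.Mono X) (h' : Y.Epi X') :
    ∃ D : UniserialModule.{u, w} R, D.Mono X' ∧ D.Epi X ∧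
      Nonempty ((X × X') ≃ₗ[R] (Y × D)) := by
  obtain ⟨⟨a, ha⟩, ⟨f, hf⟩⟩ := id h
  obtain ⟨⟨c, hc⟩, ⟨b, hb⟩⟩ := id h'
  by_cases hfa : Function.Surjective (f.comp a)
  · have e : X ≃ₗ[R] Y := LinearEquiv.ofBijective f ⟨hf, Function.Surjective.of_comp (g := a) hfa⟩
    exact ⟨X', Mono.refl _, h'.symm.trans (Epi.of_linearEquiv e.symm),
      ⟨e.prodCongr (LinearEquiv.refl R X')⟩⟩
  by_cases hbc : Function.Injective (b.comp c)
  · have e : Y ≃ₗ[R] X' := LinearEquiv.ofBijective c ⟨Function.Injective.of_comp (f := b) hbc, hc⟩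
    exact ⟨X, h.symm.trans (Mono.of_linearEquiv e), Epi.refl _,
      ⟨(LinearEquiv.prodComm R X X').trans (e.symm.prodCongr (LinearEquiv.refl R X))⟩⟩
  obtain ⟨D, hD, hD', ψ, -⟩ := exists_exchange X X' Y ha hc hf hb
    (Y.uniserial.bijective_add Y.uniserial (hf.comp ha) hfa (hb.comp hc) hbc)
  exact ⟨D, hD, hD', ⟨ψ⟩⟩

theorem nonempty_prod_linearEquiv (h₁ : Y.Mono X) (h₂ : Y.Epi X') (h₃ : Y'.Mono X')
    (h₄ : Y'.Epi X) : Nonempty ((X × X') ≃ₗ[R] (Y × Y')) := by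
  obtain ⟨D, hD, hD', ⟨e⟩⟩ := exists_fourth h₁ h₂
  obtain ⟨e'⟩ := (hD.trans h₃.symm).nonempty_linearEquiv (hD'.trans h₄.symm)
  exact ⟨e.trans ((LinearEquiv.refl R Y).prodCongr e')⟩

/-- Some module shares its monogeny class with `U` and its epigeny class with `V`. -/
def Linked (U V : UniserialModule.{u, w} R) : Prop :=
  ∃ Z : UniserialModule.{u, w} R, Z.Mono U ∧ Z.Epi V

theorem Mono.linked (h : U.Mono V) : U.Linked V := ⟨V, h.symm, Epi.refl V⟩

theorem Epi.linked (h : U.Epi V) : U.Linked V := ⟨U, Mono.refl U, h⟩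

theorem Linked.refl (U : UniserialModule.{u, w} R) : U.Linked U := (Mono.refl U).linked

theorem Linked.symm (h : U.Linked V) : V.Linked U := by
  obtain ⟨Z, hZ, hZ'⟩ := h
  obtain ⟨D, hD, hD', -⟩ := exists_fourth hZ hZ'
  exact ⟨D, hD, hD'⟩

theorem Linked.trans (h : U.Linked V) (h' : V.Linked W) : U.Linked W := by
  obtain ⟨Z, hZ, hZ'⟩ := h
  obtain ⟨T, hT, hT'⟩ := h'
  obtain ⟨D, hD, hD', -⟩ := exists_fourth hT.symm hZ'.symm
  exact ⟨D, hD.trans hZ, hD'.trans hT'⟩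

theorem IsNonsmall.epi_of_linked (hU : U.IsNonsmall) (hV : V.IsNonsmall) (h : U.Linked V) :
    U.Epi V := by
  obtain ⟨Z, hZ, hZ'⟩ := h
  exact (hU.epi (hV.of_epi hZ'.symm) hZ.symm).trans hZ'

theorem IsNonsmall.exists_exchange {D : UniserialModule.{u, w} R} (hD : D.IsNonsmall)
    (h : Y.Mono D) (h' : Y.Epi X) (d : D) :
    ∃ D' : UniserialModule.{u, w} R, D'.IsNonsmall ∧ D'.Mono X ∧
      ∃ ψ : (D × X) ≃ₗ[R] (Y × D'), (ψ (d, 0)).2 = 0 := by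
  wlog hd : d ≠ 0
  · obtain ⟨d', hd'⟩ := exists_ne (0 : D)
    obtain ⟨D', h₁, h₂, ψ, -⟩ := this hD h h' d' hd'
    rw [not_not] at hd
    subst hd
    exact ⟨D', h₁, h₂, ψ, by rw [Prod.mk_zero_zero, map_zero]; rfl⟩
  obtain ⟨f, hf⟩ := h.2
  obtain ⟨a, ha, hafd⟩ := hD.exists_injective_apply_eq hf h.symm d
  obtain ⟨s, hs, hsd⟩ := hD.2 d
  obtain ⟨⟨c₀, hc₀⟩, ⟨b, hb⟩⟩ := h'
  have hsi := D.uniserial.injective_of_apply_eq_self hd hsd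
  let t : Y →ₗ[R] Y := (f.comp s).comp a
  have ht : ¬ Function.Surjective t := fun h => hs fun x => by
    obtain ⟨y, hy⟩ := h (f x)
    exact ⟨a y, hf hy⟩
  have hti : Function.Injective t := (hf.comp hsi).comp ha
  let c : Y →ₗ[R] X := c₀.comp (LinearMap.id - t)
  have hc : Function.Surjective c := hc₀.comp (Y.uniserial.surjective_id_sub ht)
  have hcfd : c (f d) = 0 := by simp [c, t, hafd, hsd]
  have hbc : ¬ Function.Injective (b.comp c) := fun hi => hd (hf (hi (by simp [hcfd])))
  obtain ⟨D', h₁, h₂, ψ, hψ⟩ := UniserialModule.exists_exchange D X Y ha hc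
    (f := f.comp s) (hf.comp hsi) hb
    (Y.uniserial.bijective_add Y.uniserial hti ht (hb.comp hc) hbc)
  refine ⟨D', hD.of_epi h₂.symm, h₁, ψ, ?_⟩
  have := hψ (f d)
  rw [hafd, hcfd] at this
  rw [this]

end UniserialModule

/-! ### Isomorphisms of direct sums -/

namespace DirectSum

variable {R : Type*} [Ring R] {K L : Type*} {Q : K → Type*} [∀ k, AddCommGroup (Q k)]
  [∀ k, Module R (Q k)]

variable (R Q) in
/-- Splitting off one summand of a direct sum. -/
noncomputable def splitEquiv (e : Option L ≃ K) :
    (⨁ k, Q k) ≃ₗ[R] Q (e none) × ⨁ l, Q (e (some l)) :=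
  (lequivCongrLeft R e.symm).trans (lequivProdDirectSum R (α := fun o => Q (e o)))

@[simp]
theorem splitEquiv_fst (e : Option L ≃ K) (x : ⨁ k, Q k) :
    (splitEquiv R Q e x).1 = x (e none) :=
  lequivCongrLeft_apply (R := R) e.symm x none

@[simp]
theorem splitEquiv_snd (e : Option L ≃ K) (x : ⨁ k, Q k) (l : L) :
    (splitEquiv R Q e x).2 l = x (e (some l)) :=
  lequivCongrLeft_apply (R := R) e.symm x (some l)

variable {P Y : ℕ → Type*} [∀ n, AddCommGroup (P n)] [∀ n, Module R (P n)]
  [∀ n, AddCommGroup (Y n)] [∀ n, Module R (Y n)]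

/-- The composite of the projections to the second factor. -/
def iterateSnd (e : ∀ n, P n ≃ₗ[R] Y n × P (n + 1)) : ∀ n, P 0 →ₗ[R] P n
  | 0 => LinearMap.id
  | n + 1 => (LinearMap.snd R _ _).comp ((e n).toLinearMap.comp (iterateSnd e n))

theorem iterateSnd_succ_apply (e : ∀ n, P n ≃ₗ[R] Y n × P (n + 1)) (n : ℕ) (m : P 0) :
    iterateSnd e (n + 1) m = (e n (iterateSnd e n m)).2 := rfl

theorem exists_iterateSnd_eq (e : ∀ n, P n ≃ₗ[R] Y n × P (n + 1)) (n : ℕ) (p : P n) :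
    ∃ m, iterateSnd e n m = p ∧ ∀ k < n, (e k (iterateSnd e k m)).1 = 0 := by
  induction n with
  | zero => exact ⟨p, rfl, fun k hk => absurd hk (Nat.not_lt_zero k)⟩
  | succ n ih =>
    obtain ⟨m, hm, h⟩ := ih ((e n).symm (0, p))
    refine ⟨m, ?_, fun k hk => ?_⟩
    · rw [iterateSnd_succ_apply, hm, LinearEquiv.apply_symm_apply]
    · rcases (Nat.lt_succ_iff_lt_or_eq.1 hk) with hk | rfl
      · exact h k hk
      · rw [hm, LinearEquiv.apply_symm_apply]

/-- Splitting off one summand after the other exhausts a module all of whose elements are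
eventually killed. -/
theorem nonempty_linearEquiv_of_split (e : ∀ n, P n ≃ₗ[R] Y n × P (n + 1))
    (h : ∀ m, ∃ n, iterateSnd e n m = 0) : Nonempty (P 0 ≃ₗ[R] ⨁ n, Y n) := by
  have hle : ∀ m n k, n ≤ k → iterateSnd e n m = 0 → iterateSnd e k m = 0 := by
    intro m n k hnk hn
    induction k, hnk using Nat.le_induction with
    | base => exact hn
    | succ k _ ih => rw [iterateSnd_succ_apply, ih, map_zero]; rfl
  let π : ∀ n, P 0 →ₗ[R] Y n := fun n =>
    (LinearMap.fst R _ _).comp ((e n).toLinearMap.comp (iterateSnd e n))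
  have hπ : ∀ n m, π n m = (e n (iterateSnd e n m)).1 := fun n m => rfl
  have hπ0 : ∀ n k m, n ≤ k → iterateSnd e n m = 0 → π k m = 0 := fun n k m hnk hn => by
    rw [hπ, hle m n k hnk hn, map_zero]; rfl
  have hfin : ∀ m, {n | π n m ≠ 0}.Finite := fun m => by
    obtain ⟨n, hn⟩ := h m
    refine (Finset.range n).finite_toSet.subset fun k hk => ?_
    rw [Finset.mem_coe, Finset.mem_range]
    by_contra hcon
    exact hk (hπ0 n k m (not_lt.1 hcon) hn)
  refine ⟨LinearEquiv.ofBijective (LinearMap.toDirectSum π hfin) ⟨?_, ?_⟩⟩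
  · rw [injective_iff_map_eq_zero]
    intro m hm
    have hm' : ∀ n, π n m = 0 := fun n => by
      rw [← LinearMap.toDirectSum_apply π hfin, hm]; rfl
    obtain ⟨n, hn⟩ := h m
    induction n with
    | zero => exact hn
    | succ n ih =>
      refine ih ((e n).map_eq_zero_iff.1 (Prod.ext (hm' n) hn))
  · rw [← LinearMap.range_eq_top, eq_top_iff]
    intro y _
    classical
    induction y using DirectSum.induction_on with
    | zero => exact Submodule.zero_mem _
    | add x y hx hy => exact Submodule.add_mem _ (hx trivial) (hy trivial)
    | of n y =>
      obtain ⟨m, hm, h0⟩ := exists_iterateSnd_eq e n ((e n).symm (y, 0))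
      refine ⟨m, DFinsupp.ext fun k => ?_⟩
      have hn : iterateSnd e (n + 1) m = 0 := by
        rw [iterateSnd_succ_apply, hm, LinearEquiv.apply_symm_apply]
      refine (LinearMap.toDirectSum_apply π hfin m k).trans ?_
      rcases lt_trichotomy k n with hk | rfl | hk
      · exact (h0 k hk).trans (DirectSum.of_eq_of_ne n k y hk.ne).symm
      · rw [hπ, hm, LinearEquiv.apply_symm_apply]
        exact (DirectSum.of_eq_same (β := Y) k y).symm
      · exact (hπ0 (n + 1) k m hk hn).trans (DirectSum.of_eq_of_ne n k y hk.ne').symm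

end DirectSum

namespace UniserialModule

open DirectSum

variable {R : Type u} [Ring R]

/-- The direct sums of two families are isomorphic. -/
def SumIso {I J : Type*} (U : I → UniserialModule.{u, w} R) (V : J → UniserialModule.{u, w} R) :
    Prop := Nonempty ((⨁ i, U i) ≃ₗ[R] ⨁ j, V j)

variable {I J K : Type*} {U : I → UniserialModule.{u, w} R} {V : J → UniserialModule.{u, w} R}
  {W : K → UniserialModule.{u, w} R}

theorem SumIso.symm (h : SumIso U V) : SumIso V U := h.map LinearEquiv.symm

theorem SumIso.trans (h : SumIso U V) (h' : SumIso V W) : SumIso U W :=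
  h.elim fun e => h'.map fun e' => e.trans e'

theorem SumIso.reindex (V : J → UniserialModule.{u, w} R) (e : I ≃ J) :
    SumIso (fun i => V (e i)) V :=
  ⟨(lequivCongrLeft R (M := fun j => (V j : Type w)) e.symm).symm⟩

theorem SumIso.of_forall {U V : I → UniserialModule.{u, w} R}
    (h : ∀ i, Nonempty (U i ≃ₗ[R] V i)) : SumIso U V :=
  ⟨congrLinearEquiv fun i => (h i).some⟩

theorem SumIso.sigma {T : Type*} {A B : T → Type*} {U : (Σ t, A t) → UniserialModule.{u, w} R}
    {V : (Σ t, B t) → UniserialModule.{u, w} R}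
    (h : ∀ t, SumIso (fun a => U ⟨t, a⟩) fun b => V ⟨t, b⟩) : SumIso U V := by
  classical
  exact ⟨(sigmaLcurryEquiv R (δ := fun t a => (U ⟨t, a⟩ : Type w))).trans
    ((congrLinearEquiv fun t => (h t).some).trans
      (sigmaLcurryEquiv R (δ := fun t b => (V ⟨t, b⟩ : Type w))).symm)⟩

theorem SumIso.of_fibers {T : Type*} (p : I → T) (q : J → T)
    (h : ∀ t, SumIso (fun i : {i // p i = t} => U i) fun j : {j // q j = t} => V j) :
    SumIso U V :=
  (SumIso.reindex U (Equiv.sigmaFiberEquiv p)).symm.trans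
    ((SumIso.sigma (U := fun x => U (Equiv.sigmaFiberEquiv p x))
      (V := fun x => V (Equiv.sigmaFiberEquiv q x)) h).trans
      (SumIso.reindex V (Equiv.sigmaFiberEquiv q)))

theorem SumIso.fin_two {U V : Fin 2 → UniserialModule.{u, w} R}
    (h : Nonempty ((U 0 × U 1) ≃ₗ[R] (V 0 × V 1))) : SumIso U V :=
  h.map fun e => (linearEquivFunOnFintype R (Fin 2) fun i => (U i : Type w)).trans
    ((LinearEquiv.piFinTwo R fun i => (U i : Type w)).trans (e.trans
      ((linearEquivFunOnFintype R (Fin 2) fun i => (V i : Type w)).trans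
        (LinearEquiv.piFinTwo R fun i => (V i : Type w))).symm))

/-- The shift `Option ℕ ≃ ℕ` sending `none` to `0`. -/
def optionNatEquiv : Option ℕ ≃ ℕ where
  toFun o := o.elim 0 Nat.succ
  invFun n := Nat.casesOn n none some
  left_inv o := by cases o <;> rfl
  right_inv n := by cases n <;> rfl

/-- A stage in the stepwise comparison of two sequences of uniserial modules. -/
structure HalfLine (R : Type u) [Ring R] where
  /-- The module carried along. -/
  D : UniserialModule.{u, w} R
  /-- The modules to be absorbed. -/
  X : ℕ → UniserialModule.{u, w} R
  /-- The modules to be split off. -/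
  Y : ℕ → UniserialModule.{u, w} R
  /-- An exhaustion of the module carried along. -/
  g : ℕ → D
  nonsmall : D.IsNonsmall
  exhaustion : IsExhaustion (R := R) g
  mono_zero : (Y 0).Mono D
  mono_succ : ∀ k, (Y (k + 1)).Mono (X k)
  epi : ∀ k, (Y k).Epi (X k)

theorem HalfLine.exists_step (S : HalfLine.{u, w} R) (n : ℕ) :
    ∃ (D : UniserialModule.{u, w} R) (g : ℕ → D), D.IsNonsmall ∧ IsExhaustion (R := R) g ∧
      D.Mono (S.X 0) ∧ ∃ ψ : (S.D × S.X 0) ≃ₗ[R] (S.Y 0 × D), (ψ (S.g n, 0)).2 = 0 ∧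
        ∀ k, (ψ (S.g k, 0)).2 ∈ R ∙ g k := by
  obtain ⟨D, hD, hDX, ψ, hψ⟩ := S.nonsmall.exists_exchange S.mono_zero (S.epi 0) (S.g n)
  obtain ⟨x, hx⟩ := hD.1
  choose c hc₁ hc₂ using D.uniserial.exists_common_multiple
  obtain ⟨g, hg, hg'⟩ := D.exists_isExhaustion (fun k => c (x k) (ψ (S.g k, 0)).2) fun y => by
    obtain ⟨k, r, rfl⟩ := hx y
    obtain ⟨t, ht⟩ := hc₁ (x k) (ψ (S.g k, 0)).2
    exact ⟨k, r * t, by rw [mul_smul, ht]⟩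
  refine ⟨D, g, hD, hg, hDX, ψ, hψ, fun k => ?_⟩
  obtain ⟨t, ht⟩ := hc₂ (x k) (ψ (S.g k, 0)).2
  have := Submodule.smul_mem _ t (hg' k)
  rwa [ht] at this

theorem sumIso_halfLine {X Y : ℕ → UniserialModule.{u, w} R} (hX : (X 0).IsNonsmall)
    (h : ∀ k, (Y k).Mono (X k)) (h' : ∀ k, (Y k).Epi (X (k + 1))) : SumIso X Y := by
  choose D g hD hg hDX ψ hψ hψg using HalfLine.exists_step (R := R)
  let next : ℕ → HalfLine.{u, w} R → HalfLine.{u, w} R := fun n S =>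
    { D := D S n, X := fun k => S.X (k + 1), Y := fun k => S.Y (k + 1), g := g S n
      nonsmall := hD S n
      exhaustion := hg S n
      mono_zero := (S.mono_succ 0).trans (hDX S n).symm
      mono_succ := fun k => S.mono_succ (k + 1)
      epi := fun k => S.epi (k + 1) }
  obtain ⟨g₀, hg₀, -⟩ := (X 0).exists_isExhaustion _ hX.1.choose_spec
  let start : HalfLine.{u, w} R :=
    { D := X 0, X := fun k => X (k + 1), Y := Y, g := g₀
      nonsmall := hX
      exhaustion := hg₀
      mono_zero := h 0
      mono_succ := fun k => h (k + 1)
      epi := h' }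
  let S : ℕ → HalfLine.{u, w} R := fun n => Nat.rec start next n
  have hSY : ∀ n k, (S n).Y k = Y (k + n) := by
    intro n
    induction n with
    | zero => intro k; rfl
    | succ n ih =>
      intro k
      change (S n).Y (k + 1) = _
      rw [ih]
      congr 1
      omega
  let P : ℕ → Type w := fun n => (S n).D × ⨁ k, (S n).X k
  let e : ∀ n, P n ≃ₗ[R] (S n).Y 0 × P (n + 1) := fun n =>
    (((LinearEquiv.refl R (S n).D).prodCongr
      (splitEquiv R (fun k => ((S n).X k : Type w)) optionNatEquiv)).trans
      (LinearEquiv.prodAssoc R (S n).D ((S n).X 0) (⨁ k, (S n).X (k + 1))).symm).trans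
      (((ψ (S n) n).prodCongr (LinearEquiv.refl R _)).trans (LinearEquiv.prodAssoc R _ _ _))
  have he1 : ∀ n p, (e n p).2.1 = (ψ (S n) n (p.1, p.2 0)).2 := fun n p => by
    change (ψ (S n) n (p.1, (splitEquiv R (fun k => ((S n).X k : Type w)) optionNatEquiv p.2).1)).2
      = _
    rw [splitEquiv_fst]
    rfl
  have he2 : ∀ n p k, (e n p).2.2 k = p.2 (k + 1) := fun n p k =>
    splitEquiv_snd (R := R) (Q := fun k => ((S n).X k : Type w)) optionNatEquiv p.2 k
  have hsupp : ∀ n (m : P 0) N, (∀ k, N ≤ k → m.2 k = 0) → ∀ k, N ≤ k + n →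
      (iterateSnd e n m).2 k = 0 := by
    intro n m N hN
    induction n with
    | zero => exact hN
    | succ n ih =>
      intro k hk
      rw [iterateSnd_succ_apply, he2]
      exact ih (k + 1) (by omega)
  have hkill : ∀ m : P 0, ∃ n, iterateSnd e n m = 0 := by
    intro m
    have hfin := DirectSum.finite_setOf_ne_zero m.2
    obtain ⟨N, hN⟩ := hfin.bddAbove
    have hz : ∀ n, N + 1 ≤ n → (iterateSnd e n m).2 = 0 := fun n hn => DFinsupp.ext fun k =>
      hsupp n m (N + 1) (fun k hk => by
        by_contra hcon
        have := hN hcon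
        omega) k (by omega)
    have hstep : ∀ n, N + 1 ≤ n → iterateSnd e (n + 1) m =
        ((ψ (S n) n ((iterateSnd e n m).1, 0)).2, 0) := fun n hn =>
      Prod.ext (by
        rw [iterateSnd_succ_apply, he1, hz n hn]; rfl) (hz (n + 1) (by omega))
    obtain ⟨k, hk⟩ := (S (N + 1)).exhaustion.cofinal (iterateSnd e (N + 1) m).1
    have hmem : ∀ n, N + 1 ≤ n → (iterateSnd e n m).1 ∈ R ∙ (S n).g k := by
      intro n hn
      induction n, hn using Nat.le_induction with
      | base => exact hk
      | succ n hn ih =>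
        rw [hstep n hn]
        obtain ⟨r, hr⟩ := Submodule.mem_span_singleton.1 ih
        have h1 : ((iterateSnd e n m).1, (0 : (S n).X 0)) = r • ((S n).g k, 0) := by
          rw [← hr, Prod.smul_mk, smul_zero]
        rw [h1, map_smul]
        exact Submodule.smul_mem _ r (hψg (S n) n k)
    refine ⟨k + N + 1 + 1, ?_⟩
    rw [hstep _ (by omega)]
    have h2 := (Submodule.span_singleton_le_iff_mem _ _).2
      ((S (k + N + 1)).exhaustion.mono (show k ≤ k + N + 1 by omega)) (hmem (k + N + 1) (by omega))
    obtain ⟨r, hr⟩ := Submodule.mem_span_singleton.1 h2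
    have h1 : ((iterateSnd e (k + N + 1) m).1, (0 : (S (k + N + 1)).X 0)) =
        r • ((S (k + N + 1)).g (k + N + 1), 0) := by
      rw [← hr, Prod.smul_mk, smul_zero]
    rw [h1, map_smul, Prod.smul_snd, hψ, smul_zero]
    rfl
  obtain ⟨E⟩ := nonempty_linearEquiv_of_split e hkill
  have hY : (fun n => (S n).Y 0) = Y := funext fun n => by rw [hSY, Nat.zero_add]
  rw [← hY]
  exact ⟨(splitEquiv R (fun k => (X k : Type w)) optionNatEquiv).trans E⟩

end UniserialModule

/-! ### Sufficiency -/

theorem Equiv.Perm.exists_involutive_involutive {α : Type*} (π : Equiv.Perm α) :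
    ∃ ρ : α → α, Function.Involutive ρ ∧ Function.Involutive (ρ ∘ π) := by
  let S := Equiv.Perm.SameCycle.setoid π
  let r : α → α := fun x => (Quotient.mk S x).out
  have hr : ∀ x, π.SameCycle (r x) x := fun x => Quotient.exact (Quotient.out_eq (Quotient.mk S x))
  have hr' : ∀ x y, π.SameCycle x y → r x = r y := fun x y h =>
    congrArg Quotient.out (Quotient.sound (s := S) h)
  choose c hc using hr
  have key : ∀ x (k : ℤ), (π ^ (-c ((π ^ k) (r x)))) (r ((π ^ k) (r x))) = (π ^ (-k)) (r x) := by
    intro x k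
    have h1 : r ((π ^ k) (r x)) = r x := by
      refine (hr' x _ ?_).symm
      exact (Equiv.Perm.SameCycle.symm ⟨c x, hc x⟩).trans ⟨k, rfl⟩
    have h2 := hc ((π ^ k) (r x))
    rw [h1] at h2 ⊢
    rw [zpow_neg, zpow_neg, Equiv.Perm.inv_eq_iff_eq, ← Equiv.Perm.mul_apply]
    generalize c ((π ^ k) (r x)) = l at h2 ⊢
    rw [((Commute.refl π).zpow_zpow l k).inv_right.eq, Equiv.Perm.mul_apply, h2,
      ← Equiv.Perm.mul_apply, inv_mul_cancel, Equiv.Perm.one_apply]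
  let ρ : α → α := fun x => (π ^ (-c x)) (r x)
  have hρ : ∀ x (k : ℤ), ρ ((π ^ k) (r x)) = (π ^ (-k)) (r x) := key
  have hρx : ∀ x, ρ x = (π ^ (-c x)) (r x) := fun x => rfl
  have hρρ : Function.Involutive ρ := fun x => by
    rw [hρx x, hρ, neg_neg, hc]
  refine ⟨ρ, hρρ, fun x => ?_⟩
  have h1 : π (ρ (π x)) = ρ x := by
    have : π x = (π ^ (1 + c x)) (r x) := by
      rw [zpow_add, Equiv.Perm.mul_apply, hc, zpow_one]
    rw [this, hρ, hρx, ← Equiv.Perm.mul_apply, ← zpow_one_add]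
    congr 2
    ring
  simp only [Function.comp_apply]
  rw [h1, hρρ]

theorem Cardinal.dichotomy_of_add_eq_add {a b p : Cardinal.{w}} (h : a + p = b + p) :
    a = b ∨ Cardinal.aleph0 ≤ p ∧ a ≤ p ∧ b ≤ p := by
  rcases lt_or_ge p Cardinal.aleph0 with hp | hp
  · exact Or.inl (Cardinal.eq_of_add_eq_add_right h hp)
  rcases le_or_gt a p with ha | ha
  · rcases le_or_gt b p with hb | hb
    · exact Or.inr ⟨hp, ha, hb⟩
    · rw [Cardinal.add_eq_right hp ha, Cardinal.add_eq_left (hp.trans hb.le) hb.le] at h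
      exact absurd h hb.ne
  · rcases le_or_gt b p with hb | hb
    · rw [Cardinal.add_eq_right hp hb, Cardinal.add_eq_left (hp.trans ha.le) ha.le] at h
      exact absurd h.symm ha.ne
    · rw [Cardinal.add_eq_left (hp.trans hb.le) hb.le,
        Cardinal.add_eq_left (hp.trans ha.le) ha.le] at h
      exact Or.inl h

namespace UniserialModule

variable {R : Type u} [Ring R] {I J : Type w}

theorem SumIso.of_involutive {A B : I → UniserialModule.{u, w} R} {ρ : I → I}
    (hρ : Function.Involutive ρ) (h : ∀ i, (A i).Mono (B i))
    (h' : ∀ i, (B i).Epi (A (ρ i))) : SumIso A B := by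
  refine SumIso.of_fibers (fun i => s(i, ρ i)) (fun i => s(i, ρ i)) fun t => ?_
  by_cases hfix : ∀ i : {i // s(i, ρ i) = t}, ρ i = i
  · refine SumIso.of_forall fun i => (h i).nonempty_linearEquiv ?_
    have := h' i
    rw [hfix] at this
    exact this.symm
  push Not at hfix
  obtain ⟨⟨i, hi⟩, hne⟩ := hfix
  have hi' : s(ρ i, ρ (ρ i)) = t := by rw [hρ, Sym2.eq_swap, hi]
  let e : Fin 2 ≃ {i // s(i, ρ i) = t} := Equiv.ofBijective ![⟨i, hi⟩, ⟨ρ i, hi'⟩] (by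
    constructor
    · intro a b hab
      fin_cases a <;> fin_cases b <;> simp at hab ⊢
      · exact hne hab.symm
      · exact hne hab
    · rintro ⟨j, hj⟩
      have hji : j = i ∨ j = ρ i := by
        have h1 : s(j, ρ j) = s(i, ρ i) := hj.trans hi.symm
        rcases Sym2.eq_iff.1 h1 with h2 | h2
        · exact Or.inl h2.1
        · exact Or.inr h2.1
      rcases hji with rfl | rfl
      · exact ⟨0, rfl⟩
      · exact ⟨1, rfl⟩)
  refine (SumIso.reindex (fun i : {i // s(i, ρ i) = t} => A i) e).symm.trans
    (SumIso.trans (SumIso.fin_two ?_) (SumIso.reindex (fun i : {i // s(i, ρ i) = t} => B i) e))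
  have h1 := h' (ρ i)
  rw [hρ] at h1
  exact nonempty_prod_linearEquiv (h i).symm (h' i) (h (ρ i)).symm h1

theorem SumIso.of_perm {A B : I → UniserialModule.{u, w} R} (π : Equiv.Perm I)
    (hA : ∀ i j, (A i).Linked (A j)) (h : ∀ i, (A i).Mono (B i))
    (h' : ∀ i, (B i).Epi (A (π i))) : SumIso A B := by
  obtain ⟨ρ, hρ, hρπ⟩ := π.exists_involutive_involutive
  choose Z hZ hZ' using fun i => hA i (ρ i)
  refine (SumIso.of_involutive hρ (fun i => (hZ i).symm) hZ').trans
    (SumIso.of_involutive hρπ (fun i => (hZ i).trans (h i)) fun i => (h' i).trans ?_)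
  have := (hZ' (ρ (π i))).symm
  rwa [hρ] at this

theorem exists_absorb {U : I → UniserialModule.{u, w} R} (hU : ∀ i j, (U i).Linked (U j))
    (h₁ : Cardinal.aleph0 ≤ Cardinal.mk {i // ¬ (U i).IsNonsmall})
    (h₂ : Cardinal.mk {i // (U i).IsNonsmall} ≤ Cardinal.mk {i // ¬ (U i).IsNonsmall}) :
    ∃ (W : I → UniserialModule.{u, w} R) (ρ : I ≃ {i // ¬ (U i).IsNonsmall}),
      (∀ i, (W i).Mono (U i)) ∧ (∀ i, (W i).Epi (U (ρ i))) ∧ SumIso U W := by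
  classical
  have hcard : Cardinal.mk ({i // (U i).IsNonsmall} × ℕ) ≤
      Cardinal.mk {i // ¬ (U i).IsNonsmall} := by
    rw [Cardinal.mk_prod, Cardinal.lift_uzero, Cardinal.mk_nat, Cardinal.lift_aleph0]
    exact (mul_le_mul' h₂ h₁).trans (Cardinal.mul_eq_self h₁).le
  obtain ⟨c⟩ := hcard
  obtain ⟨ch, hch₀, hch₁⟩ : ∃ ch : {i // (U i).IsNonsmall} × ℕ → I,
      (∀ n, ch (n, 0) = n.1) ∧ ∀ n k, ch (n, k + 1) = (c (n, k)).1 :=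
    ⟨fun x => Nat.casesOn x.2 x.1.1 fun k => (c (x.1, k)).1, fun _ => rfl, fun _ _ => rfl⟩
  have hch : Function.Injective ch := by
    rintro ⟨n, k⟩ ⟨n', k'⟩ h
    cases k with
    | zero =>
      cases k' with
      | zero =>
        rw [hch₀, hch₀] at h
        rw [Subtype.ext h]
      | succ k' =>
        rw [hch₀, hch₁] at h
        exact absurd (h ▸ n.2) (c (n', k')).2
    | succ k =>
      cases k' with
      | zero =>
        rw [hch₀, hch₁] at h
        exact absurd (h ▸ n'.2) (c (n, k)).2
      | succ k' =>
        rw [hch₁, hch₁] at h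
        have h1 := c.injective (Subtype.ext h)
        simp only [Prod.mk.injEq] at h1 ⊢
        exact ⟨h1.1, by rw [h1.2]⟩
  let ρ : I → I := fun i =>
    if h : ∃ x, ch x = i then ch (h.choose.1, h.choose.2 + 1) else i
  let p : I → Option {i // (U i).IsNonsmall} := fun i =>
    if h : ∃ x, ch x = i then some h.choose.1 else none
  have hex : ∀ x, ∃ y, ch y = ch x := fun x => ⟨x, rfl⟩
  have hch' : ∀ x, (hex x).choose = x := fun x => hch (hex x).choose_spec
  have hρc : ∀ x, ρ (ch x) = ch (x.1, x.2 + 1) := fun x => by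
    simp only [ρ]
    rw [dif_pos (hex x), hch']
  have hpc : ∀ x, p (ch x) = some x.1 := fun x => by
    simp only [p]
    rw [dif_pos (hex x), hch']
  have hρn : ∀ i, (¬ ∃ x, ch x = i) → ρ i = i := by
    intro i hi
    simp only [ρ]
    rw [dif_neg hi]
  have hpn : ∀ i, (¬ ∃ x, ch x = i) → p i = none := by
    intro i hi
    simp only [p]
    rw [dif_neg hi]
  have hρP : ∀ i, ¬ (U (ρ i)).IsNonsmall := by
    intro i
    by_cases hi : ∃ x, ch x = i
    · obtain ⟨x, rfl⟩ := hi
      rw [hρc, hch₁]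
      exact (c _).2
    · rw [hρn i hi]
      exact fun hN => hi ⟨(⟨i, hN⟩, 0), hch₀ _⟩
  let ρ' : I ≃ {i // ¬ (U i).IsNonsmall} := Equiv.ofBijective (fun i => ⟨ρ i, hρP i⟩) (by
    constructor
    · intro i j hij
      have hij' : ρ i = ρ j := congrArg Subtype.val hij
      by_cases hi : ∃ x, ch x = i
      · obtain ⟨x, rfl⟩ := hi
        by_cases hj : ∃ y, ch y = j
        · obtain ⟨y, rfl⟩ := hj
          rw [hρc, hρc] at hij'
          have := hch hij'
          simp only [Prod.mk.injEq, Nat.add_right_cancel_iff] at this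
          rw [Prod.ext this.1 this.2]
        · rw [hρc, hρn j hj] at hij'
          exact absurd ⟨_, hij'⟩ hj
      · by_cases hj : ∃ y, ch y = j
        · obtain ⟨y, rfl⟩ := hj
          rw [hρc, hρn i hi] at hij'
          exact absurd ⟨_, hij'.symm⟩ hi
        · rwa [hρn i hi, hρn j hj] at hij'
    · rintro ⟨i, hi⟩
      by_cases h : ∃ x, ch x = i
      · obtain ⟨⟨n, k⟩, rfl⟩ := h
        cases k with
        | zero =>
          rw [hch₀] at hi
          exact absurd n.2 hi
        | succ k => exact ⟨ch (n, k), Subtype.ext (hρc _)⟩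
      · exact ⟨i, Subtype.ext (hρn i h)⟩)
  choose W hW hW' using fun i => hU i (ρ i)
  refine ⟨W, ρ', hW, hW', SumIso.of_fibers p p fun t => ?_⟩
  cases t with
  | none =>
    refine SumIso.of_forall fun i => (hW i).symm.nonempty_linearEquiv ?_
    have hi : ¬ ∃ x, ch x = i.1 := by
      rintro ⟨x, hx⟩
      have := i.2
      rw [← hx, hpc] at this
      exact Option.some_ne_none _ this
    have := hW' i.1
    rw [hρn i hi] at this
    exact this.symm
  | some n =>
    let e : ℕ ≃ {i // p i = some n} := Equiv.ofBijective (fun k => ⟨ch (n, k), hpc _⟩) (by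
      constructor
      · intro k l hkl
        exact congrArg Prod.snd (hch (congrArg Subtype.val hkl))
      · rintro ⟨i, hi⟩
        by_cases h : ∃ x, ch x = i
        · obtain ⟨⟨m, k⟩, rfl⟩ := h
          rw [hpc] at hi
          obtain rfl : m = n := Option.some.inj hi
          exact ⟨k, rfl⟩
        · rw [hpn i h] at hi
          exact absurd hi (Option.some_ne_none _).symm)
    have hn : (U (ch (n, 0))).IsNonsmall := by
      rw [hch₀]
      exact n.2
    refine (SumIso.reindex (fun i : {i // p i = some n} => U i) e).symm.trans
      (SumIso.trans (sumIso_halfLine hn (fun k => hW (ch (n, k))) fun k => ?_)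
        (SumIso.reindex (fun i : {i // p i = some n} => W i) e))
    have := hW' (ch (n, k))
    rw [hρc] at this
    exact this

theorem sumIso_of_linked {U V : I → UniserialModule.{u, w} R}
    (hU : ∀ i j, (U i).Linked (U j)) (h : ∀ i, (U i).Mono (V i))
    (τ : {i // ¬ (U i).IsNonsmall} ≃ {i // ¬ (V i).IsNonsmall})
    (hτ : ∀ i, (U i.1).Epi (V (τ i).1)) : SumIso U V := by
  classical
  have hUV : ∀ i j, (U i).Linked (V j) := fun i j => (hU i j).trans (h j).linked
  have hV : ∀ i j, (V i).Linked (V j) := fun i j => (h i).symm.linked.trans (hUV i j)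
  have hcard : Cardinal.mk {i // (U i).IsNonsmall} + Cardinal.mk {i // ¬ (U i).IsNonsmall} =
      Cardinal.mk {i // (V i).IsNonsmall} + Cardinal.mk {i // ¬ (U i).IsNonsmall} := by
    rw [Cardinal.mk_congr τ]
    conv_lhs => rw [← Cardinal.mk_congr τ]
    rw [Cardinal.add_def, Cardinal.add_def, Cardinal.mk_congr (Equiv.sumCompl _),
      Cardinal.mk_congr (Equiv.sumCompl _)]
  rcases Cardinal.dichotomy_of_add_eq_add hcard with heq | ⟨h₁, h₂, h₃⟩
  · obtain ⟨e⟩ := Cardinal.eq.1 heq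
    refine SumIso.of_perm (Equiv.subtypeCongr e τ).symm hU h fun i => ?_
    obtain ⟨j, rfl⟩ := (Equiv.subtypeCongr e τ).surjective i
    rw [Equiv.symm_apply_apply]
    by_cases hj : (U j).IsNonsmall
    · have h1 : Equiv.subtypeCongr e τ j = e ⟨j, hj⟩ := by
        simp [Equiv.subtypeCongr, hj]
      rw [h1]
      exact (e ⟨j, hj⟩).2.epi_of_linked hj (hUV _ _).symm
    · have h1 : Equiv.subtypeCongr e τ j = τ ⟨j, hj⟩ := by
        simp [Equiv.subtypeCongr, hj]
      rw [h1]
      exact (hτ ⟨j, hj⟩).symm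
  · obtain ⟨W, ρ, hW, hW', hUW⟩ := exists_absorb hU h₁ h₂
    rw [Cardinal.mk_congr τ] at h₁ h₃
    obtain ⟨W', ρ', hV₁, hV₂, hVW⟩ := exists_absorb hV h₁ h₃
    refine hUW.trans (SumIso.trans ?_ hVW.symm)
    refine SumIso.of_perm (ρ'.trans (τ.symm.trans ρ.symm))
      (fun i j => ((hW i).linked.trans (hU i j)).trans (hW j).symm.linked)
      (fun i => (hW i).trans ((h i).trans (hV₁ i).symm)) fun i => (hV₂ i).trans ?_
    have h1 := hτ (τ.symm (ρ' i))
    rw [Equiv.apply_symm_apply] at h1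
    have h2 := hW' (ρ.symm (τ.symm (ρ' i)))
    rw [Equiv.apply_symm_apply] at h2
    exact h1.symm.trans h2.symm

theorem sumIso_of_equiv {U : I → UniserialModule.{u, w} R} {V : J → UniserialModule.{u, w} R}
    (σ : I ≃ J) (h : ∀ i, (U i).Mono (V (σ i)))
    (τ : {i // ¬ (U i).IsNonsmall} ≃ {j // ¬ (V j).IsNonsmall})
    (hτ : ∀ i, (U i.1).Epi (V (τ i).1)) : SumIso U V := by
  let S : Setoid (UniserialModule.{u, w} R) :=
    ⟨Linked, Linked.refl, Linked.symm, Linked.trans⟩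
  refine SumIso.trans (SumIso.of_fibers (fun i => Quotient.mk S (U i))
    (fun i => Quotient.mk S (U i)) fun t => ?_) (SumIso.reindex V σ)
  have hUV : ∀ i, Quotient.mk S (U i) = Quotient.mk S (V (σ i)) := fun i =>
    Quotient.sound (h i).linked
  have hτ₁ : ∀ i, Quotient.mk S (U (σ.symm (τ i))) = Quotient.mk S (U i) := fun i => by
    rw [hUV, Equiv.apply_symm_apply]
    exact (Quotient.sound (s := S) (hτ i).linked).symm
  refine sumIso_of_linked (U := fun i : {i // Quotient.mk S (U i) = t} => U i)
    (V := fun i : {i // Quotient.mk S (U i) = t} => V (σ i))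
    (fun i j => Quotient.exact (i.2.trans j.2.symm)) (fun i => h i)
    { toFun := fun x => ⟨⟨σ.symm (τ ⟨x.1.1, x.2⟩), (hτ₁ _).trans x.1.2⟩, by
        rw [Equiv.apply_symm_apply]
        exact (τ ⟨x.1.1, x.2⟩).2⟩
      invFun := fun x => ⟨⟨τ.symm ⟨σ x.1.1, x.2⟩, by
        rw [← hτ₁, Equiv.apply_symm_apply, Equiv.symm_apply_apply, x.1.2]⟩,
        (τ.symm ⟨σ x.1.1, x.2⟩).2⟩
      left_inv := fun x => by simp
      right_inv := fun x => by simp } fun i => ?_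
  have := hτ ⟨i.1.1, i.2⟩
  simpa using this

end UniserialModule

/-! ### Cancellation and exchange in direct sums -/

namespace LinearEquiv

variable {R : Type*} [Ring R] {M N B C : Type*} [AddCommGroup M] [Module R M]
  [AddCommGroup N] [Module R N] [AddCommGroup B] [Module R B] [AddCommGroup C] [Module R C]

theorem nonempty_of_prod_of_bijective (e : (M × B) ≃ₗ[R] (N × C))
    (h : Function.Bijective fun x => (e (x, 0)).1) : Nonempty (B ≃ₗ[R] C) := by
  let α : M ≃ₗ[R] N := LinearEquiv.ofBijective
    ((LinearMap.fst R N C).comp (e.toLinearMap.comp (LinearMap.inl R M B))) h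
  have hα : ∀ x, (e (x, 0)).1 = α x := fun x => rfl
  let β : B →ₗ[R] N := (LinearMap.fst R N C).comp (e.toLinearMap.comp (LinearMap.inr R M B))
  have hβ : ∀ b, (e (0, b)).1 = β b := fun b => rfl
  have hsplit : ∀ x b, e (x, b) = e (x, 0) + e (0, b) := fun x b => by
    rw [← map_add, Prod.mk_add_mk, add_zero, zero_add]
  let s : B →ₗ[R] M × B := (-(α.symm.toLinearMap.comp β)).prod LinearMap.id
  have hs : ∀ b, s b = (-α.symm (β b), b) := fun b => rfl
  have hs1 : ∀ b, (e (s b)).1 = 0 := fun b => by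
    rw [hs, hsplit, Prod.fst_add, hα, hβ, map_neg, α.apply_symm_apply, neg_add_cancel]
  refine ⟨LinearEquiv.ofBijective ((LinearMap.snd R N C).comp (e.toLinearMap.comp s)) ⟨?_, ?_⟩⟩
  · rw [injective_iff_map_eq_zero]
    intro b hb
    have : e (s b) = 0 := Prod.ext (hs1 b) hb
    exact congrArg Prod.snd (e.map_eq_zero_iff.1 this)
  · intro c
    obtain ⟨⟨x, b⟩, hxb⟩ := e.surjective (0, c)
    refine ⟨b, ?_⟩
    have hx : -α.symm (β b) = x := by
      have h1 : α x + β b = 0 := by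
        rw [← hα, ← hβ, ← Prod.fst_add, ← hsplit, hxb]
      rw [← map_neg, ← eq_neg_of_add_eq_zero_left h1, α.symm_apply_apply]
    change (e (s b)).2 = c
    rw [hs, hx, hxb]

end LinearEquiv

namespace UniserialModule

open DirectSum

variable {R : Type u} [Ring R]

theorem exists_linearEquiv_directSum_of_prod {K : Type w} {V : K → UniserialModule.{u, w} R}
    {U : UniserialModule.{u, w} R} (hU : ¬ U.IsNonsmall) {B : Type*} [AddCommGroup B] [Module R B]
    (φ : (U × B) ≃ₗ[R] ⨁ k, V k) :
    ∃ (L : Type w) (e : Option L ≃ K) (W : L → UniserialModule.{u, w} R),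
      (V (e none)).Epi U ∧ (∀ l, (W l).Epi (V (e (some l)))) ∧
        Nonempty (B ≃ₗ[R] ⨁ l, W l) := by
  classical
  let a : ∀ k, U →ₗ[R] V k := fun k =>
    (component R K (fun k => V k) k).comp (φ.toLinearMap.comp (LinearMap.inl R U B))
  let b : ∀ k, V k →ₗ[R] U := fun k =>
    ((LinearMap.fst R U B).comp φ.symm.toLinearMap).comp (lof R K (fun k => V k) k)
  have ha : ∀ k u, φ (u, 0) k = a k u := fun k u => rfl
  have hid : ∀ u, ((LinearMap.fst R U B).comp φ.symm.toLinearMap)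
      ((φ.toLinearMap.comp (LinearMap.inl R U B)) u) = u := fun u => by simp
  obtain ⟨k, hk⟩ : ∃ k, Function.Surjective ((b k).comp (a k)) :=
    exists_surjective_component hU hid
  obtain ⟨l, hl⟩ : ∃ k, Function.Injective ((b k).comp (a k)) :=
    exists_injective_component hid
  by_cases hbij : ∃ k, Function.Bijective ((b k).comp (a k))
  · obtain ⟨k, hk⟩ := hbij
    have hak : Function.Bijective (a k) := ⟨Function.Injective.of_comp (f := b k) hk.1,
      (V k).uniserial.surjective_right_of_comp hk.2⟩
    obtain ⟨L, e, rfl⟩ : ∃ (L : Type w) (e : Option L ≃ K), e none = k :=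
      ⟨{j // j ≠ k}, Equiv.optionSubtypeNe k, rfl⟩
    refine ⟨L, e, fun l => V (e (some l)),
      Epi.of_linearEquiv (LinearEquiv.ofBijective (a _) hak).symm, fun _ => Epi.refl _,
      LinearEquiv.nonempty_of_prod_of_bijective (φ.trans (splitEquiv R (fun k => V k) e)) ?_⟩
    simp only [LinearEquiv.trans_apply, splitEquiv_fst]
    exact hak
  · push Not at hbij
    have hk' : ¬ Function.Injective ((b k).comp (a k)) := fun h => hbij k ⟨h, hk⟩
    have hl' : ¬ Function.Surjective ((b l).comp (a l)) := fun h => hbij l ⟨hl, h⟩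
    have hkl : l ≠ k := by
      rintro rfl
      exact hk' hl
    obtain ⟨L, e, rfl, rfl⟩ : ∃ (L : Type w) (e : Option (Option L) ≃ K),
        e none = k ∧ e (some none) = l :=
      ⟨{c // c ≠ (⟨l, hkl⟩ : {j // j ≠ k})},
        (Equiv.optionCongr (Equiv.optionSubtypeNe _)).trans (Equiv.optionSubtypeNe k), rfl, rfl⟩
    obtain ⟨D, -, hD, ψ, hψ⟩ := exists_exchange (V (e (some none))) (V (e none)) U
      (Function.Injective.of_comp (f := b _) hl) ((V _).uniserial.surjective_right_of_comp hk)
      ((V _).uniserial.injective_left_of_comp hl)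
      (Function.Surjective.of_comp (f := b _) (g := a _) hk)
      (U.uniserial.bijective_add U.uniserial hl hl' hk hk')
    let W : Option L → UniserialModule.{u, w} R := fun o =>
      o.elim D fun l => V (e (some (some l)))
    let Θ : (⨁ k, V k) ≃ₗ[R] (U × (D × ⨁ l : L, V (e (some (some l))))) :=
      (splitEquiv R (fun k => V k) e).trans <|
      ((LinearEquiv.refl R (V (e none))).prodCongr
        (splitEquiv R (fun o => V (e (some o))) (Equiv.refl (Option L)))).trans <|
      (LinearEquiv.prodAssoc R _ _ _).symm.trans <|
      (((LinearEquiv.prodComm R _ _).trans ψ).prodCongr (LinearEquiv.refl R _)).trans <|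
      LinearEquiv.prodAssoc R _ _ _
    have hΘ : ∀ x, (Θ x).1 = (ψ (x (e (some none)), x (e none))).1 := fun x => by
      simp only [Θ, LinearEquiv.trans_apply, ← splitEquiv_fst (R := R) (Q := fun k => V k) e x,
        ← splitEquiv_snd (R := R) (Q := fun k => V k) e x none]
      rfl
    obtain ⟨θ⟩ := LinearEquiv.nonempty_of_prod_of_bijective (φ.trans Θ) (by
      have : ∀ u, (Θ (φ (u, 0))).1 = u := fun u => by
        rw [hΘ, ha, ha, hψ]
      simp only [LinearEquiv.trans_apply, this]
      exact Function.bijective_id)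
    refine ⟨Option L, e, W, ⟨⟨_, Function.Surjective.of_comp (f := b _) (g := a _) hk⟩, ⟨a (e none),
      (V _).uniserial.surjective_right_of_comp hk⟩⟩, ?_,
      ⟨θ.trans (splitEquiv R (fun o => W o) (Equiv.refl (Option L))).symm⟩⟩
    rintro (_ | l)
    · exact hD
    · exact Epi.refl _

theorem SumIso.exists_injective_epi (n : ℕ) {I J : Type w} {U : I → UniserialModule.{u, w} R}
    {V : J → UniserialModule.{u, w} R} (h : SumIso U V) (p : Fin n → I)
    (hp : Function.Injective p) (hns : ∀ k, ¬ (U (p k)).IsNonsmall) :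
    ∃ q : Fin n → J, Function.Injective q ∧ ∀ k, (V (q k)).Epi (U (p k)) := by
  classical
  induction n generalizing I J with
  | zero => exact ⟨finZeroElim, fun k => k.elim0, fun k => k.elim0⟩
  | succ n ih =>
    obtain ⟨φ⟩ := h
    obtain ⟨L, e, W, he, hW, hB⟩ := exists_linearEquiv_directSum_of_prod (hns 0)
      ((splitEquiv R (fun i => U i) (Equiv.optionSubtypeNe (p 0))).symm.trans φ)
    obtain ⟨q, hq, hq'⟩ := ih (U := fun i : {i // i ≠ p 0} => U i) (V := W) hB
      (fun k => ⟨p k.succ, fun h => Fin.succ_ne_zero k (hp h)⟩)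
      (fun k l hkl => Fin.succ_injective _ (hp (congrArg Subtype.val hkl)))
      (fun k => hns k.succ)
    refine ⟨Fin.cons (e none) fun k => e (some (q k)), ?_, ?_⟩
    · rw [Fin.cons_injective_iff]
      refine ⟨?_, fun k l hkl => hq (Option.some_injective _ (e.injective hkl))⟩
      rintro ⟨k, hk⟩
      exact Option.some_ne_none _ (e.injective hk)
    · refine Fin.cases he fun k => ?_
      exact (hW (q k)).symm.trans (hq' k)

end UniserialModule

/-! ### Independent elements of products of uniserial modules -/

section Independence

variable {R : Type*} [Ring R] {ι J : Type*} {Q : J → Type*} [∀ j, AddCommGroup (Q j)]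
  [∀ j, Module R (Q j)]

theorem card_le_card_of_forall_smul_eq_zero (hQ : ∀ j, IsUniserialModule R (Q j))
    (F : Finset J) (s : Finset ι) (z : ι → ∀ j, Q j) (hz : ∀ i ∈ s, z i ≠ 0)
    (hF : ∀ i ∈ s, ∀ j ∉ F, z i j = 0)
    (hind : ∀ c : ι → R, ∑ i ∈ s, c i • z i = 0 → ∀ i ∈ s, c i • z i = 0) :
    s.card ≤ F.card := by
  classical
  induction F using Finset.induction_on generalizing s z with
  | empty =>
    rw [Finset.card_empty, Nat.le_zero, Finset.card_eq_zero, Finset.eq_empty_iff_forall_notMem]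
    exact fun i hi => hz i hi (funext fun j => hF i hi j (Finset.notMem_empty j))
  | insert j F hj ih =>
    rw [Finset.card_insert_of_notMem hj]
    by_cases h : ∀ i ∈ s, ∃ r : R, r • z i ≠ 0 ∧ (r • z i) j = 0
    · have h' : ∀ i, ∃ r : R, i ∈ s → r • z i ≠ 0 ∧ (r • z i) j = 0 := fun i => by
        by_cases hi : i ∈ s
        · exact (h i hi).imp fun r hr _ => hr
        · exact ⟨0, fun hi' => absurd hi' hi⟩
      choose r hr using h'
      refine (ih s (fun i => r i • z i) (fun i hi => (hr i hi).1) (fun i hi k hk => ?_)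
        fun c hc i hi => ?_).trans (Nat.le_succ _)
      · by_cases hkj : k = j
        · rw [hkj]
          exact (hr i hi).2
        · change r i • z i k = 0
          rw [hF i hi k (by simp [hk, hkj]), smul_zero]
      · have := hind (fun i => c i * r i) (by simpa only [mul_smul] using hc) i hi
        simpa only [mul_smul] using this
    · push Not at h
      obtain ⟨i₀, hi₀, h₀⟩ := h
      have h₀' : ∀ r : R, r • z i₀ j = 0 → r • z i₀ = 0 := fun r hr => by
        by_contra hne
        exact h₀ r hne hr
      have hz₀ : z i₀ j ≠ 0 := fun h => hz i₀ hi₀ (by simpa using h₀' 1 (by rw [h, smul_zero]))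
      have h' : ∀ i, ∃ r t : R, i ∈ s → r • z i ≠ 0 ∧ r • z i j + t • z i₀ j = 0 := fun i => by
        rcases (hQ j).exists_smul_eq_or (z i j) (z i₀ j) with ⟨r, hr⟩ | ⟨r, hr⟩
        · refine ⟨r, -1, fun hi => ⟨fun h => hz₀ ?_, ?_⟩⟩
          · rw [← hr]
            exact congrFun h j
          · rw [hr, neg_smul, one_smul, add_neg_cancel]
        · refine ⟨1, -r, fun hi => ⟨by rw [one_smul]; exact hz i hi, ?_⟩⟩
          rw [one_smul, neg_smul, hr, add_neg_cancel]
      choose r t hrt using h'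
      have key : ∀ c : ι → R, ∑ i ∈ s.erase i₀, c i • (r i • z i + t i • z i₀) = 0 →
          ∀ i ∈ s.erase i₀, c i • r i • z i = 0 := by
        intro c hc i hi
        have := hind (fun i => if i = i₀ then ∑ k ∈ s.erase i₀, c k * t k else c i * r i) (by
          rw [← Finset.add_sum_erase _ _ hi₀, if_pos rfl, Finset.sum_smul,
            ← Finset.sum_add_distrib, ← hc]
          refine Finset.sum_congr rfl fun k hk => ?_
          rw [if_neg (Finset.ne_of_mem_erase hk), smul_add, mul_smul, mul_smul, add_comm])
          i (Finset.mem_of_mem_erase hi)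
        rwa [if_neg (Finset.ne_of_mem_erase hi), mul_smul] at this
      have := ih (s.erase i₀) (fun i => r i • z i + t i • z i₀) (fun i hi h => ?_)
        (fun i hi k hk => ?_) fun c hc i hi => ?_
      · rw [Finset.card_erase_of_mem hi₀] at this
        omega
      · refine (hrt i (Finset.mem_of_mem_erase hi)).1 ?_
        have := key (fun k => if k = i then 1 else 0) (by
          rw [Finset.sum_eq_single_of_mem i hi fun k _ hk => by rw [if_neg hk, zero_smul],
            if_pos rfl, one_smul, h]) i hi
        rwa [if_pos rfl, one_smul] at this
      · by_cases hkj : k = j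
        · rw [hkj]
          exact (hrt i (Finset.mem_of_mem_erase hi)).2
        · change r i • z i k + t i • z i₀ k = 0
          rw [hF i (Finset.mem_of_mem_erase hi) k (by simp [hk, hkj]),
            hF i₀ hi₀ k (by simp [hk, hkj]), smul_zero, smul_zero, add_zero]
      · have h1 := key c hc i hi
        have h2 : c i • r i • z i j = 0 := congrFun h1 j
        rw [smul_add, h1, zero_add, ← mul_smul]
        apply h₀'
        have h3 := congrArg (c i • ·) (hrt i (Finset.mem_of_mem_erase hi)).2
        simp only [smul_add, smul_zero, h2, zero_add] at h3
        rwa [mul_smul]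

end Independence

/-! ### Comparing cardinalities of index sets -/

theorem IsUniserialModule.countable_setOf_exists_apply_ne_zero {R : Type*} [Ring R] {M : Type*}
    [AddCommGroup M] [Module R M] (hM : IsUniserialModule R M) {K : Type*} {Q : K → Type*}
    [∀ k, AddCommGroup (Q k)] [∀ k, Module R (Q k)] (f : M →ₗ[R] DirectSum K Q) :
    {k | ∃ x, f x k ≠ 0}.Countable := by
  classical
  let S : M → Finset K := fun x => (DirectSum.finite_setOf_ne_zero (f x)).toFinset
  have hS : ∀ x k, k ∈ S x ↔ f x k ≠ 0 := fun x k => by simp [S]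
  have hsub : ∀ (r : R) x, S (r • x) ⊆ S x := fun r x k hk => by
    rw [hS] at hk ⊢
    intro h
    rw [map_smul, DirectSum.smul_apply, h, smul_zero] at hk
    exact hk rfl
  have hinj : Set.InjOn Finset.card (Set.range S) := by
    rintro _ ⟨x, rfl⟩ _ ⟨y, rfl⟩ hxy
    rcases hM.exists_smul_eq_or x y with ⟨r, rfl⟩ | ⟨r, rfl⟩
    · exact (Finset.eq_of_subset_of_card_le (hsub r x) hxy.le).symm
    · exact Finset.eq_of_subset_of_card_le (hsub r y) hxy.ge
  have hcount : (Set.range S).Countable :=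
    Set.countable_of_injective_of_countable_image hinj (Set.to_countable _)
  refine (hcount.biUnion (t := fun s _ => ((s : Finset K) : Set K))
    fun s _ => s.countable_toSet).mono ?_
  rintro k ⟨x, hx⟩
  exact Set.mem_biUnion (Set.mem_range_self x) (Finset.mem_coe.2 ((hS x k).2 hx))

theorem Cardinal.mk_le_of_countable_fibers {A B : Type w} (g : A → B)
    (hg : ∀ b, {a | g a = b}.Countable)
    (hfin : Finite B → ∀ s : Finset A, s.card ≤ Nat.card B) : Cardinal.mk A ≤ Cardinal.mk B := by
  rcases finite_or_infinite B with hB | hB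
  · have hA : Finite A := by
      by_contra hA
      rw [not_finite_iff_infinite] at hA
      obtain ⟨s, hs⟩ := Infinite.exists_subset_card_eq A (Nat.card B + 1)
      have := hfin hB s
      omega
    have := Fintype.ofFinite A
    have h := hfin hB Finset.univ
    rw [Finset.card_univ, ← Nat.card_eq_fintype_card] at h
    have := Fintype.ofFinite B
    rw [Nat.card_eq_fintype_card, Nat.card_eq_fintype_card] at h
    rw [Cardinal.mk_fintype, Cardinal.mk_fintype]
    exact_mod_cast h
  · have h : ∀ b, ∃ e : {a | g a = b} → ℕ, Function.Injective e := fun b =>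
      (hg b).to_subtype.exists_injective_nat
    choose e he using h
    have hinj : Function.Injective fun a => (g a, ULift.up.{w} (e (g a) ⟨a, rfl⟩)) := by
      intro a a' h
      obtain ⟨h1, h2⟩ := Prod.ext_iff.1 h
      have h2 := ULift.up_injective h2
      dsimp only at h1 h2
      have h3 : ∀ b (hb : g a' = b), e b ⟨a', hb⟩ = e (g a') ⟨a', rfl⟩ := by
        rintro _ rfl
        rfl
      rw [← h3 _ h1.symm] at h2
      exact congrArg Subtype.val (he _ h2)
    refine (Cardinal.mk_le_of_injective hinj).trans ?_
    rw [Cardinal.mk_prod, Cardinal.lift_id, Cardinal.lift_id]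
    exact Cardinal.mul_le_of_le (Cardinal.aleph0_le_mk B) le_rfl
      (by simp)

theorem exists_equiv_of_forall_mk_eq {A B : Type w} {X : Type*} (r : Setoid X) (p : A → X)
    (q : B → X) (h : ∀ x, Cardinal.mk {a // r (p a) x} = Cardinal.mk {b // r (q b) x}) :
    ∃ σ : A ≃ B, ∀ a, r (p a) (q (σ a)) := by
  have h' : ∀ c : Quotient r, Nonempty
      ({a // (Quotient.mk r (p a)) = c} ≃ {b // (Quotient.mk r (q b)) = c}) := fun c => by
    induction c using Quotient.inductionOn with
    | h x =>
      obtain ⟨e⟩ := Cardinal.eq.1 (h x)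
      exact ⟨(Equiv.subtypeEquivRight fun a => Quotient.eq).trans
        (e.trans (Equiv.subtypeEquivRight fun b => Quotient.eq.symm))⟩
  let e := fun c => (h' c).some
  refine ⟨(Equiv.sigmaFiberEquiv fun a => Quotient.mk r (p a)).symm.trans
    ((Equiv.sigmaCongrRight e).trans (Equiv.sigmaFiberEquiv fun b => Quotient.mk r (q b))),
    fun a => ?_⟩
  exact Quotient.exact (e _ ⟨a, rfl⟩).2.symm

/-! ### Invariants of direct sums of uniserial modules -/

namespace UniserialModule

open DirectSum

variable {R : Type u} [Ring R] {I J : Type w} {U : I → UniserialModule.{u, w} R}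
  {V : J → UniserialModule.{u, w} R}

theorem mk_setOf_mono_le (h : SumIso U V) (T : UniserialModule.{u, w} R) :
    Cardinal.mk {i // (U i).Mono T} ≤ Cardinal.mk {j // (V j).Mono T} := by
  classical
  obtain ⟨φ⟩ := h
  let a : ∀ i j, U i →ₗ[R] V j := fun i j =>
    (component R J (fun j => V j) j).comp (φ.toLinearMap.comp (lof R I (fun i => U i) i))
  let b : ∀ j i, V j →ₗ[R] U i := fun j i =>
    ((component R I (fun i => U i) i).comp φ.symm.toLinearMap).comp (lof R J (fun j => V j) j)
  have hg : ∀ i, ∃ j, Function.Injective ((b j i).comp (a i j)) := fun i =>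
    exists_injective_component (f := φ.toLinearMap.comp (lof R I (fun i => U i) i))
      (g := (component R I (fun i => U i) i).comp φ.symm.toLinearMap) fun u => by
        simp [component.lof_self]
  choose g hg using hg
  have hmono : ∀ i i' j, (U i).Mono (U i') → Function.Injective ((b j i').comp (a i j)) →
      (V j).Mono (U i) := fun i i' j hii' hi => by
    obtain ⟨f, hf⟩ := hii'.2
    exact ⟨⟨f.comp (b j i'), hf.comp ((V j).uniserial.injective_left_of_comp hi)⟩,
      ⟨a i j, Function.Injective.of_comp (f := b j i') hi⟩⟩
  refine Cardinal.mk_le_of_countable_fibers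
    (fun i => ⟨g i.1, (hmono _ _ _ (Mono.refl _) (hg i.1)).trans i.2⟩) (fun j => ?_)
    fun _ s => ?_
  · refine (((V j.1).uniserial.countable_setOf_exists_apply_ne_zero
      (φ.symm.toLinearMap.comp (lof R J (fun j => V j) j.1))).preimage
        Subtype.val_injective).mono ?_
    rintro i rfl
    obtain ⟨u, hu⟩ := exists_ne (0 : U i.1)
    refine ⟨a i.1 (g i.1) u, fun h0 => hu (hg i.1 ?_)⟩
    exact h0.trans (map_zero _).symm
  · have hx : ∀ i : {i // (U i).Mono T}, ∃ x : U i.1, x ≠ 0 ∧ ∀ i' ∈ s, ∀ j,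
        ¬ (V j).Mono T → b j i'.1 (a i.1 j x) = 0 := by
      intro i
      obtain ⟨u, hu⟩ := exists_ne (0 : U i.1)
      let F := (DirectSum.finite_setOf_ne_zero (φ (lof R I (fun i => U i) i.1 u))).toFinset
      have hF : ∀ j ∉ F, a i.1 j u = 0 := fun j hj => by
        simp only [F, Set.Finite.mem_toFinset, Set.mem_ofPred_eq, not_not] at hj
        exact hj
      obtain ⟨r, hr, hr'⟩ := (U i.1).uniserial.exists_smul_ne_zero_forall_eq_zero
        ((s ×ˢ F).filter fun p => ¬ (V p.2).Mono T)
        (fun p => (b p.2 p.1.1).comp (a i.1 p.2)) (fun p hp hinj =>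
          (Finset.mem_filter.1 hp).2 ((hmono i.1 p.1.1 p.2 (i.2.trans p.1.2.symm) hinj).trans i.2))
        hu
      refine ⟨r • u, hr, fun i' hi' j hj => ?_⟩
      by_cases hjF : j ∈ F
      · exact hr' (i', j) (by simp [hi', hjF, hj])
      · rw [map_smul, hF j hjF, smul_zero, map_zero]
    choose x hx hx' using hx
    have := Fintype.ofFinite {j // (V j).Mono T}
    rw [Nat.card_eq_fintype_card, ← Finset.card_univ]
    have key : ∀ c : {i // (U i).Mono T} → R,
        ∑ i ∈ s, c i • (fun j : {j // (V j).Mono T} => a i.1 j.1 (x i)) = 0 →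
          ∀ i ∈ s, c i • x i = 0 := by
      intro c hc i₀ hi₀
      let y : ⨁ i, U i := ∑ i ∈ s, c i • lof R I (fun i => U i) i.1 (x i)
      have hy : ∀ j, φ y j = ∑ i ∈ s, c i • a i.1 j (x i) := fun j => by
        change component R J (fun j => V j) j (φ y) = _
        simp only [y, map_sum, map_smul]
        rfl
      have hy0 : ∀ j, (V j).Mono T → φ y j = 0 := fun j hj => by
        have := congrFun hc ⟨j, hj⟩
        rw [hy]
        simpa using this
      have h1 : y i₀.1 = c i₀ • x i₀ := by
        change component R I (fun i => U i) i₀.1 y = _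
        simp only [y, map_sum, map_smul]
        rw [Finset.sum_eq_single_of_mem i₀ hi₀, component.lof_self]
        intro i _ hi
        rw [component.of, dif_neg (fun h => hi (Subtype.ext h)), smul_zero]
      rw [← h1]
      have h2 : y i₀.1 = ((component R I (fun i => U i) i₀.1).comp φ.symm.toLinearMap) (φ y) := by
        simp only [LinearMap.comp_apply, LinearEquiv.coe_coe, LinearEquiv.symm_apply_apply]
        rfl
      rw [h2, DirectSum.apply_eq_sum _ (φ y) (DirectSum.finite_setOf_ne_zero (φ y)).toFinset
        (by simp)]
      refine Finset.sum_eq_zero fun j _ => ?_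
      change b j i₀.1 (φ y j) = 0
      by_cases hj : (V j).Mono T
      · rw [hy0 j hj, map_zero]
      · rw [hy, map_sum]
        refine Finset.sum_eq_zero fun i _ => ?_
        rw [map_smul, hx' i i₀ hi₀ j hj, smul_zero]
    refine card_le_card_of_forall_smul_eq_zero
      (Q := fun j : {j // (V j).Mono T} => V j.1) (fun j => (V j.1).uniserial) Finset.univ s
      (fun i j => a i.1 j.1 (x i)) (fun i hi h => hx i ?_)
      (fun i _ j hj => absurd (Finset.mem_univ j) hj) fun c hc i hi => ?_
    · have := key (fun k => if k = i then 1 else 0) (by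
        rw [Finset.sum_eq_single_of_mem i hi fun k _ hk => by rw [if_neg hk, zero_smul],
          if_pos rfl, one_smul, h]) i hi
      rwa [if_pos rfl, one_smul] at this
    · funext j
      change c i • a i.1 j.1 (x i) = 0
      rw [← map_smul, key c hc i hi, map_zero]

theorem mk_setOf_epi_le (h : SumIso U V) (T : UniserialModule.{u, w} R) :
    Cardinal.mk {i : {i // ¬ (U i).IsNonsmall} // (U i.1).Epi T} ≤
      Cardinal.mk {j : {j // ¬ (V j).IsNonsmall} // (V j.1).Epi T} := by
  classical
  obtain ⟨φ⟩ := id h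
  let a : ∀ i j, U i →ₗ[R] V j := fun i j =>
    (component R J (fun j => V j) j).comp (φ.toLinearMap.comp (lof R I (fun i => U i) i))
  let b : ∀ j i, V j →ₗ[R] U i := fun j i =>
    ((component R I (fun i => U i) i).comp φ.symm.toLinearMap).comp (lof R J (fun j => V j) j)
  have hg : ∀ i : {i // ¬ (U i).IsNonsmall}, ∃ j,
      Function.Surjective ((b j i.1).comp (a i.1 j)) := fun i =>
    exists_surjective_component (f := φ.toLinearMap.comp (lof R I (fun i => U i) i.1))
      (g := (component R I (fun i => U i) i.1).comp φ.symm.toLinearMap) i.2 fun u => by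
        simp [component.lof_self]
  choose g hg using hg
  have hepi : ∀ i, (V (g i)).Epi (U i.1) := fun i =>
    ⟨⟨b _ _, Function.Surjective.of_comp (f := b _ _) (g := a _ _) (hg i)⟩,
      ⟨a _ _, (V _).uniserial.surjective_right_of_comp (hg i)⟩⟩
  refine Cardinal.mk_le_of_countable_fibers (fun i => ⟨⟨g i.1, fun hj => i.1.2
    (hj.of_epi (hepi i.1))⟩, (hepi i.1).trans i.2⟩) (fun j => ?_) fun _ s => ?_
  · refine (((V j.1.1).uniserial.countable_setOf_exists_apply_ne_zero
      (φ.symm.toLinearMap.comp (lof R J (fun j => V j) j.1.1))).preimage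
        (Subtype.val_injective.comp Subtype.val_injective)).mono ?_
    rintro i rfl
    obtain ⟨u, hu⟩ := exists_ne (0 : U i.1.1)
    obtain ⟨y, rfl⟩ := hg i.1 u
    exact ⟨a i.1.1 (g i.1) y, hu⟩
  · let p : Fin s.card → I := fun k => (s.equivFin.symm k).1.1.1
    obtain ⟨q, hq, hq'⟩ := h.exists_injective_epi s.card p
      (Subtype.val_injective.comp (Subtype.val_injective.comp
        (Subtype.val_injective.comp s.equivFin.symm.injective)))
      fun k => (s.equivFin.symm k).1.1.2
    have := Nat.card_le_card_of_injective (fun k => (⟨⟨q k, fun hj =>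
      (s.equivFin.symm k).1.1.2 (hj.of_epi (hq' k))⟩, (hq' k).trans (s.equivFin.symm k).1.2⟩ :
        {j : {j // ¬ (V j).IsNonsmall} // (V j.1).Epi T}))
      fun k l hkl => hq (congrArg (fun j => j.1.1) hkl)
    simpa using this

variable (R) in
/-- Having the same monogeny class is an equivalence relation. -/
def monoSetoid : Setoid (UniserialModule.{u, w} R) where
  r := Mono
  iseqv := ⟨Mono.refl, Mono.symm, Mono.trans⟩

variable (R) in
/-- Having the same epigeny class is an equivalence relation. -/
def epiSetoid : Setoid (UniserialModule.{u, w} R) where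
  r := Epi
  iseqv := ⟨Epi.refl, Epi.symm, Epi.trans⟩

theorem SumIso.exists_equiv_mono (h : SumIso U V) : ∃ σ : I ≃ J, ∀ i, (U i).Mono (V (σ i)) :=
  exists_equiv_of_forall_mk_eq (monoSetoid R) U V fun T =>
    le_antisymm (mk_setOf_mono_le h T) (mk_setOf_mono_le h.symm T)

theorem SumIso.exists_equiv_epi (h : SumIso U V) :
    ∃ τ : {i // ¬ (U i).IsNonsmall} ≃ {j // ¬ (V j).IsNonsmall},
      ∀ i, (U i.1).Epi (V (τ i).1) :=
  exists_equiv_of_forall_mk_eq (epiSetoid R) (fun i : {i // ¬ (U i).IsNonsmall} => U i.1)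
    (fun j : {j // ¬ (V j).IsNonsmall} => V j.1) fun T =>
      le_antisymm (mk_setOf_epi_le h T) (mk_setOf_epi_le h.symm T)

end UniserialModule

/-- Příhoda's weak Krull-Schmidt theorem for arbitrary direct sums of nonzero uniserial
modules: `⨁ᵢ U i ≅ ⨁ⱼ V j` iff there is a bijection `σ : I → J` matching monogeny classes
and a bijection `τ` between the quasismall indices matching epigeny classes. -/
theorem direct_sums_of_uniserial_isomorphic_iff
    {R : Type u} [Ring R] {I J : Type w}
    (U : I → Type w) (V : J → Type w)
    [∀ i, AddCommGroup (U i)] [∀ i, Module R (U i)]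
    [∀ j, AddCommGroup (V j)] [∀ j, Module R (V j)]
    (hU : ∀ i, IsUniserialModule R (U i)) (hU0 : ∀ i, ∃ x : U i, x ≠ 0)
    (hV : ∀ j, IsUniserialModule R (V j)) (hV0 : ∀ j, ∃ x : V j, x ≠ 0) :
    Nonempty ((DirectSum I U) ≃ₗ[R] (DirectSum J V)) ↔
      ((∃ σ : I ≃ J, ∀ i, SameMonogenyClass R (U i) (V (σ i))) ∧
        ∃ τ : {i : I // IsQuasismall.{u, w, w} R (U i)} ≃
            {j : J // IsQuasismall.{u, w, w} R (V j)},
          ∀ i, SameEpigenyClass R (U i.1) (V (τ i).1)) := by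
  let X : I → UniserialModule.{u, w} R := fun i =>
    haveI : Nontrivial (U i) := (hU0 i).elim fun x hx => nontrivial_of_ne x 0 hx
    ⟨U i, hU i⟩
  let Y : J → UniserialModule.{u, w} R := fun j =>
    haveI : Nontrivial (V j) := (hV0 j).elim fun x hx => nontrivial_of_ne x 0 hx
    ⟨V j, hV j⟩
  let eX : {i : I // IsQuasismall.{u, w, w} R (U i)} ≃ {i // ¬ (X i).IsNonsmall} :=
    Equiv.subtypeEquivRight fun i => (X i).isQuasismall_iff
  let eY : {j : J // IsQuasismall.{u, w, w} R (V j)} ≃ {j // ¬ (Y j).IsNonsmall} :=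
    Equiv.subtypeEquivRight fun j => (Y j).isQuasismall_iff
  constructor
  · intro h
    have h' : UniserialModule.SumIso X Y := h
    obtain ⟨τ, hτ⟩ := h'.exists_equiv_epi
    exact ⟨h'.exists_equiv_mono, (eX.trans τ).trans eY.symm, fun i => hτ (eX i)⟩
  · rintro ⟨⟨σ, hσ⟩, τ, hτ⟩
    exact UniserialModule.sumIso_of_equiv (U := X) (V := Y) σ hσ ((eX.symm.trans τ).trans eY)
      fun i => hτ (eX.symm i)
end

section
/- Let R be a ring, let {A_i : i ∈ I} be a countable family of slender right R-modules each of which has a local endomorphism ring, and let {B_j : j ∈ J} be a countable family of indecomposable slender right R-modules. If the R-modules ∏_{i∈I} A_i and ∏_{j∈J} B_j are isomorphic, then there exists a bijection σ : I → J such that A_i ≅ B_{σ(i)} for every i ∈ I. -/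
/-- A module `M` is slender if every homomorphism `f : R^ω → M` from the countable direct
product of copies of `R` kills almost all of the canonical unit vectors `eₙ`. -/
def IsSlender (R : Type*) [Ring R] (M : Type*) [AddCommGroup M] [Module R M] : Prop :=
  ∀ f : (ℕ → R) →ₗ[R] M, ∃ n₀ : ℕ, ∀ n ≥ n₀, f (Pi.single n 1) = 0

/-- A module is indecomposable if it is nonzero and is not the internal direct sum of two
nonzero submodules. -/
def IsIndecomposableModule (R : Type*) [Ring R] (M : Type*) [AddCommGroup M] [Module R M] :
    Prop :=
  (∃ x : M, x ≠ 0) ∧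
    ∀ N P : Submodule R M, N ⊓ P = ⊥ → N ⊔ P = ⊤ → N = ⊥ ∨ P = ⊥

section LocalRing

variable {E : Type*} [Ring E]

theorem IsLocalRing.isDedekindFiniteMonoid [IsLocalRing E] : IsDedekindFiniteMonoid E where
  mul_eq_one_symm {a b} h := by
    have hidem : IsIdempotentElem (b * a) := by
      rw [IsIdempotentElem, mul_assoc, ← mul_assoc a, h, one_mul]
    rcases IsLocalRing.isUnit_or_isUnit_of_add_one (add_sub_cancel (b * a) 1) with hu | hu
    · exact (IsIdempotentElem.iff_eq_one_of_isUnit hu).1 hidem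
    · have hone : 1 - b * a = 1 := (IsIdempotentElem.iff_eq_one_of_isUnit hu).1 hidem.one_sub
      have hba : b * a = 0 := by simpa using hone
      have : (1 : E) = a * (b * a) * b := by
        rw [← mul_assoc, h, one_mul, h]
      rw [hba, mul_zero, zero_mul] at this
      exact absurd this one_ne_zero

/-- The two-sided ideal of non-units of a local ring which need not be commutative. -/
def nonunitsIdeal (E : Type*) [Ring E] [IsLocalRing E] : Ideal E where
  carrier := nonunits E
  zero_mem' := by simp [mem_nonunits_iff]
  add_mem' {a b} ha hb := by
    rintro ⟨u, hu⟩
    have hsum : (↑u⁻¹ : E) * a + ↑u⁻¹ * b = 1 := by rw [← mul_add, ← hu, Units.inv_mul]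
    rcases IsLocalRing.isUnit_or_isUnit_of_add_one hsum with h | h
    · exact ha ((Units.isUnit_units_mul _ _).1 h)
    · exact hb ((Units.isUnit_units_mul _ _).1 h)
  smul_mem' c x hx h := by
    have := IsLocalRing.isDedekindFiniteMonoid (E := E)
    exact hx (isUnit_of_mul_isUnit_right h)

instance [IsLocalRing E] : (nonunitsIdeal E).IsTwoSided where
  mul_mem_of_left b ha h := by
    have := IsLocalRing.isDedekindFiniteMonoid (E := E)
    exact ha (isUnit_of_mul_isUnit_left h)

theorem mem_nonunitsIdeal [IsLocalRing E] {a : E} : a ∈ nonunitsIdeal E ↔ ¬IsUnit a := Iff.rfl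

/-- If `P * Q` is the identity matrix modulo non-units over a local ring, then `P` has at least
as many columns as rows. -/
theorem card_le_of_mul_sub_one_mem_nonunits [IsLocalRing E] {m n : Type*} [Fintype m] [Fintype n]
    [DecidableEq m] (P : Matrix m n E) (Q : Matrix n m E)
    (h : ∀ i k, ¬IsUnit ((P * Q - 1 : Matrix m m E) i k)) : Fintype.card m ≤ Fintype.card n := by
  classical
  let D := E ⧸ nonunitsIdeal E
  let π : E →+* D := Ideal.Quotient.mk _
  have : Nontrivial D := Ideal.Quotient.nontrivial_iff.2 <|
    (Ideal.ne_top_iff_one _).2 fun h1 => mem_nonunitsIdeal.1 h1 isUnit_one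
  let _ : DivisionRing D := DivisionRing.ofIsUnitOrEqZero fun a => by
    obtain ⟨a, rfl⟩ := Ideal.Quotient.mk_surjective a
    by_cases ha : IsUnit a
    · exact Or.inl (ha.map π)
    · exact Or.inr (Ideal.Quotient.eq_zero_iff_mem.2 ha)
  have hPQ : P.map π * Q.map π = 1 := by
    rw [← Matrix.map_mul]
    have hdiff : (P * Q - 1).map π = 0 := by
      ext i k
      exact Ideal.Quotient.eq_zero_iff_mem.2 (h i k)
    rw [Matrix.map_sub _ (map_sub π), Matrix.map_one π (map_zero π) (map_one π), sub_eq_zero]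
      at hdiff
    exact hdiff
  refine card_le_of_surjective D (Matrix.toLinearMapRight' (Q.map π)) fun w =>
    ⟨Matrix.vecMul w (P.map π), ?_⟩
  rw [Matrix.toLinearMapRight'_apply, Matrix.vecMul_vecMul, hPQ, Matrix.vecMul_one]

theorem isUnit_one_sub_comp_swap {M N R : Type*} [Ring R] [AddCommGroup M] [AddCommGroup N]
    [Module R M] [Module R N] (f : M →ₗ[R] N) (g : N →ₗ[R] M)
    (h : IsUnit (1 - g ∘ₗ f : Module.End R M)) : IsUnit (1 - f ∘ₗ g : Module.End R N) := by
  obtain ⟨u, hu⟩ := h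
  have hl : ∀ x, (↑u⁻¹ : Module.End R M) (x - g (f x)) = x := fun x => by
    have := LinearMap.congr_fun u.inv_mul x
    rw [hu] at this
    simpa using this
  have hr : ∀ x, (↑u⁻¹ : Module.End R M) x - g (f ((↑u⁻¹ : Module.End R M) x)) = x := fun x => by
    have := LinearMap.congr_fun u.mul_inv x
    rw [hu] at this
    simpa using this
  refine isUnit_iff_exists.2 ⟨1 + f ∘ₗ (↑u⁻¹ : Module.End R M) ∘ₗ g, ?_, ?_⟩
  · ext y
    have := congrArg f (hr (g y))
    rw [map_sub] at this
    simp only [Module.End.mul_apply, LinearMap.sub_apply, LinearMap.add_apply,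
      Module.End.one_apply, LinearMap.comp_apply, map_add]
    rw [← this]
    abel
  · ext y
    have := congrArg f (hl (g y))
    rw [map_sub, map_sub, sub_eq_iff_eq_add] at this
    simp [this]

/-- If every composite `M → N → M` is a non-unit of the local ring `End M`, then every composite
`N → M → N` lies in the Jacobson radical of `End N`. -/
theorem isUnit_one_sub_comp_of_not_isUnit {M N R : Type*} [Ring R] [AddCommGroup M]
    [AddCommGroup N] [Module R M] [Module R N] [IsLocalRing (Module.End R M)]
    (h : ∀ (p : N →ₗ[R] M) (q : M →ₗ[R] N), ¬IsUnit (p ∘ₗ q : Module.End R M))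
    (f : N →ₗ[R] M) (g : M →ₗ[R] N) (k : Module.End R N) :
    IsUnit (1 - k * (g ∘ₗ f) : Module.End R N) := by
  refine isUnit_one_sub_comp_swap (k ∘ₗ g) f ?_
  rcases IsLocalRing.isUnit_or_isUnit_of_add_one
    (add_sub_cancel (f ∘ₗ k ∘ₗ g : Module.End R M) 1) with hu | hu
  · exact absurd hu (h f (k ∘ₗ g))
  · exact hu

theorem isUnit_one_sub_mul_sum {ι : Type*} (s : Finset ι) (x : ι → E)
    (h : ∀ i ∈ s, ∀ k : E, IsUnit (1 - k * x i)) (k : E) :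
    IsUnit (1 - k * ∑ i ∈ s, x i) := by
  classical
  induction s using Finset.induction_on generalizing k with
  | empty => simp
  | insert i s hi ih =>
    obtain ⟨u, hu⟩ := ih (fun j hj => h j (Finset.mem_insert_of_mem hj)) k
    have : 1 - k * ∑ j ∈ insert i s, x j = u * (1 - ↑u⁻¹ * k * x i) := by
      rw [Finset.sum_insert hi, mul_sub, mul_one, ← mul_assoc, ← mul_assoc, Units.mul_inv, hu]
      noncomm_ring
    rw [this]
    exact u.isUnit.mul (h i (Finset.mem_insert_self _ _) _)

end LocalRing

section Indecomposable

variable {R : Type*} [Ring R] {M N : Type*} [AddCommGroup M] [AddCommGroup N] [Module R M]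
  [Module R N]

theorem nontrivial_of_isLocalRing_end [IsLocalRing (Module.End R M)] : Nontrivial M := by
  by_contra h
  rw [not_nontrivial_iff_subsingleton] at h
  exact one_ne_zero (α := Module.End R M) (LinearMap.ext fun x => Subsingleton.elim _ _)

theorem IsIndecomposableModule.nonempty_linearEquiv [Nontrivial M]
    (hN : IsIndecomposableModule R N) (p : N →ₗ[R] M) (q : M →ₗ[R] N)
    (h : IsUnit (p ∘ₗ q : Module.End R M)) : Nonempty (M ≃ₗ[R] N) := by
  have hpq : Function.Bijective (p ∘ₗ q) := (Module.End.isUnit_iff _).1 h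
  have hq : Function.Injective q := Function.Injective.of_comp (f := p) hpq.1
  have hinf : LinearMap.range q ⊓ LinearMap.ker p = ⊥ := by
    rw [eq_bot_iff]
    rintro _ ⟨⟨x, rfl⟩, hx⟩
    have : x = 0 := hpq.1 (by simpa using hx)
    simp [this]
  have hsup : LinearMap.range q ⊔ LinearMap.ker p = ⊤ := by
    rw [eq_top_iff]
    intro y _
    obtain ⟨x, hx⟩ := hpq.2 (p y)
    refine Submodule.mem_sup.2 ⟨q x, ⟨x, rfl⟩, y - q x, ?_, by abel⟩
    simpa [sub_eq_zero] using hx.symm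
  rcases hN.2 _ _ hinf hsup with h0 | h0
  · obtain ⟨x, hx⟩ := exists_ne (0 : M)
    rw [LinearMap.range_eq_bot] at h0
    exact absurd (hq (by simp [h0])) hx
  · rw [h0, sup_bot_eq, LinearMap.range_eq_top] at hsup
    exact ⟨LinearEquiv.ofBijective q ⟨hq, hsup⟩⟩

theorem isIndecomposableModule_of_isLocalRing_end [IsLocalRing (Module.End R M)] :
    IsIndecomposableModule R M := by
  have := nontrivial_of_isLocalRing_end (R := R) (M := M)
  refine ⟨exists_ne 0, fun N P hinf hsup => ?_⟩
  have hc : IsCompl N P := IsCompl.of_eq hinf hsup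
  rcases IsLocalRing.isUnit_or_isUnit_of_add_one
    (add_sub_cancel (N.projection P hc : Module.End R M) 1) with hu | hu
  · refine Or.inr ((Submodule.eq_bot_iff _).2 fun x hx => ((Module.End.isUnit_iff _).1 hu).1 ?_)
    rw [(Submodule.projection_apply_eq_zero_iff hc).2 hx, map_zero]
  · refine Or.inl ((Submodule.eq_bot_iff _).2 fun x hx => ((Module.End.isUnit_iff _).1 hu).1 ?_)
    simp [Submodule.projection_apply_of_mem_left hc hx]

end Indecomposable

section Slender

variable {R : Type*} [Ring R] {I : Type*} {A : I → Type*} [∀ i, AddCommGroup (A i)]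
  [∀ i, Module R (A i)] {M : Type*} [AddCommGroup M] [Module R M]

theorem IsSlender.finite_setOf_comp_single_ne_zero [DecidableEq I] (hM : IsSlender R M)
    (f : (∀ i, A i) →ₗ[R] M) : {i | f ∘ₗ LinearMap.single R A i ≠ 0}.Finite := by
  by_contra hinf
  have hinf : {i | f ∘ₗ LinearMap.single R A i ≠ 0}.Infinite := hinf
  let c : ℕ ↪ I := (hinf.natEmbedding _).trans (Function.Embedding.subtype _)
  have hc : ∀ n, f ∘ₗ LinearMap.single R A (c n) ≠ 0 := fun n => (hinf.natEmbedding _ n).2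
  have hx : ∀ i, ∃ x : A i, f ∘ₗ LinearMap.single R A i ≠ 0 → f (Pi.single i x) ≠ 0 := fun i => by
    by_contra! h
    exact (h 0).1 (LinearMap.ext fun x => (h x).2)
  choose x hx using hx
  let T : ∀ i, (ℕ → R) →ₗ[R] R := fun i =>
    open Classical in if h : ∃ n, c n = i then LinearMap.proj h.choose else 0
  let g : (ℕ → R) →ₗ[R] ∀ i, A i :=
    LinearMap.pi fun i => (LinearMap.toSpanSingleton R (A i) (x i)) ∘ₗ T i
  have hg : ∀ n, g (Pi.single n 1) = Pi.single (c n) (x (c n)) := fun n => by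
    ext i
    by_cases h : ∃ m, c m = i
    · have hT : T i = LinearMap.proj h.choose := dif_pos h
      obtain ⟨m, hm⟩ : ∃ m, m = h.choose := ⟨_, rfl⟩
      have hmi : c m = i := hm ▸ h.choose_spec
      subst hmi
      by_cases hmn : m = n
      · subst hmn
        simp [g, hT]
      · simp [g, hT, hmn]
    · have hT : T i = 0 := dif_neg h
      have : i ≠ c n := fun hi => h ⟨n, hi.symm⟩
      simp [g, hT, Pi.single_eq_of_ne this]
  obtain ⟨n₀, hn₀⟩ := hM (f ∘ₗ g)
  refine hx (c n₀) (hc n₀) ?_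
  simpa [hg] using hn₀ n₀ le_rfl

theorem IsSlender.eq_zero_of_comp_single_eq_zero [DecidableEq I] [Countable I]
    (hM : IsSlender R M) (f : (∀ i, A i) →ₗ[R] M)
    (hf : ∀ i, f ∘ₗ LinearMap.single R A i = 0) : f = 0 := by
  obtain ⟨c, hc⟩ := exists_injective_nat I
  ext x
  let g : (ℕ → R) →ₗ[R] ∀ i, A i := LinearMap.pi fun i =>
    (LinearMap.toSpanSingleton R (A i) (x i)) ∘ₗ
      ∑ n ∈ Finset.range (c i + 1), (LinearMap.proj n : (ℕ → R) →ₗ[R] R)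
  obtain ⟨n₀, hn₀⟩ := hM (f ∘ₗ g)
  have hfin : {i | c i < n₀}.Finite := (Set.finite_lt_nat n₀).preimage hc.injOn
  have hx : x = g (Pi.single n₀ 1) + ∑ i ∈ hfin.toFinset, Pi.single i (x i) := by
    ext i
    simp only [Pi.add_apply, Finset.sum_apply, Finset.sum_pi_single, Set.Finite.mem_toFinset,
      Set.mem_ofPred_eq]
    by_cases h : c i < n₀
    · simp [g, h, Pi.single_apply, h.not_ge]
    · simp [g, h, Pi.single_apply, not_lt.1 h]
  have h0 : f (g (Pi.single n₀ 1)) = 0 := hn₀ n₀ le_rfl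
  have h1 : ∀ i, f (Pi.single i (x i)) = 0 := fun i => LinearMap.congr_fun (hf i) (x i)
  rw [hx, map_add, h0, map_sum, Finset.sum_eq_zero fun i _ => h1 i]
  simp

/-- A homomorphism from a countable product to a slender module is determined by finitely many
of its restrictions to the factors. -/
theorem IsSlender.exists_finset_eq_sum [DecidableEq I] [Countable I]
    (hM : IsSlender R M) (f : (∀ i, A i) →ₗ[R] M) :
    ∃ s : Finset I, ∀ t, s ⊆ t →
      f = ∑ i ∈ t, (f ∘ₗ LinearMap.single R A i) ∘ₗ LinearMap.proj i := by
  refine ⟨(hM.finite_setOf_comp_single_ne_zero f).toFinset, fun t ht => ?_⟩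
  rw [← sub_eq_zero]
  refine hM.eq_zero_of_comp_single_eq_zero _ fun i => ?_
  ext x
  have hsum : ∑ k ∈ t, f (Pi.single k (Pi.single i x k)) = f (Pi.single i x) := by
    rw [Finset.sum_eq_single i]
    · simp
    · intro k _ hk
      simp [Pi.single_eq_of_ne hk]
    · intro hi
      have : f ∘ₗ LinearMap.single R A i = 0 := by
        by_contra h
        exact hi (ht ((Set.Finite.mem_toFinset _).2 h))
      simpa using LinearMap.congr_fun this x
  simp [LinearMap.sum_apply, hsum]

end Slender

section Products

variable {R : Type*} [Ring R] {I J : Type*} {A : I → Type*} {B : J → Type*}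
  [∀ i, AddCommGroup (A i)] [∀ i, Module R (A i)]
  [∀ j, AddCommGroup (B j)] [∀ j, Module R (B j)]

theorem exists_finset_sum_comp_eq [DecidableEq I] [DecidableEq J] [Countable J]
    (e : (∀ i, A i) ≃ₗ[R] ∀ j, B j) {i : I} (hi : IsSlender R (A i)) :
    ∃ s : Finset J, ∀ t, s ⊆ t → ∀ k,
      ∑ j ∈ t, (LinearMap.proj i ∘ₗ e.symm.toLinearMap ∘ₗ LinearMap.single R B j) ∘ₗ
        (LinearMap.proj j ∘ₗ e.toLinearMap ∘ₗ LinearMap.single R A k) =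
      LinearMap.proj i ∘ₗ LinearMap.single R A k := by
  obtain ⟨s, hs⟩ := hi.exists_finset_eq_sum (LinearMap.proj i ∘ₗ e.symm.toLinearMap)
  refine ⟨s, fun t ht k => ?_⟩
  ext x
  have := LinearMap.congr_fun (hs t ht) (e (Pi.single k x))
  simpa [LinearMap.sum_apply] using this.symm

theorem exists_linearEquiv_factor [Countable I] (e : (∀ i, A i) ≃ₗ[R] ∀ j, B j)
    (hAl : ∀ i, IsLocalRing (Module.End R (A i))) {j : J} (hBs : IsSlender R (B j))
    (hBi : IsIndecomposableModule R (B j)) : ∃ i, Nonempty (A i ≃ₗ[R] B j) := by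
  classical
  by_contra! hno
  obtain ⟨s, hs⟩ := exists_finset_sum_comp_eq e.symm hBs
  have hone := hs s subset_rfl j
  have hunit := isUnit_one_sub_mul_sum (E := Module.End R (B j)) s
    (fun i => (LinearMap.proj j ∘ₗ e.symm.symm.toLinearMap ∘ₗ LinearMap.single R A i) ∘ₗ
        (LinearMap.proj i ∘ₗ e.symm.toLinearMap ∘ₗ LinearMap.single R B j))
    (fun i _ k => by
      have := hAl i
      have := nontrivial_of_isLocalRing_end (R := R) (M := A i)
      exact isUnit_one_sub_comp_of_not_isUnit
        (fun p q h => (hno i).false (hBi.nonempty_linearEquiv p q h).some) _ _ k) 1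
  rw [hone] at hunit
  have hzero : (1 - 1 * (LinearMap.proj j ∘ₗ LinearMap.single R B j) : Module.End R (B j)) = 0 := by
    ext x
    simp
  rw [hzero, isUnit_zero_iff] at hunit
  obtain ⟨x, hx⟩ := hBi.1
  exact hx (LinearMap.congr_fun hunit x).symm

/-- The multiplicity of a module with local endomorphism ring in a product of slender modules is
at most its multiplicity in an isomorphic product of indecomposable modules. -/
theorem nonempty_embedding_isomorphic_factors [Countable I] [Countable J]
    (e : (∀ i, A i) ≃ₗ[R] ∀ j, B j) (hAs : ∀ i, IsSlender R (A i))
    (hBi : ∀ j, IsIndecomposableModule R (B j)) (X : Type*) [AddCommGroup X] [Module R X]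
    [IsLocalRing (Module.End R X)] :
    Nonempty ({i // Nonempty (A i ≃ₗ[R] X)} ↪ {j // Nonempty (B j ≃ₗ[R] X)}) := by
  classical
  have := nontrivial_of_isLocalRing_end (R := R) (M := X)
  rcases finite_or_infinite {j // Nonempty (B j ≃ₗ[R] X)} with hfin | hinf
  swap
  · obtain ⟨c, hc⟩ := exists_injective_nat {i // Nonempty (A i ≃ₗ[R] X)}
    exact ⟨(⟨c, hc⟩ : _ ↪ ℕ).trans (Infinite.natEmbedding _)⟩
  have := Fintype.ofFinite {j // Nonempty (B j ≃ₗ[R] X)}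
  have hcard : ∀ F : Finset {i // Nonempty (A i ≃ₗ[R] X)},
      F.card ≤ Fintype.card {j // Nonempty (B j ≃ₗ[R] X)} := by
    intro F
    let a : ∀ i : F, A i ≃ₗ[R] X := fun i => i.1.2.some
    let b : ∀ j : {j // Nonempty (B j ≃ₗ[R] X)}, B j ≃ₗ[R] X := fun j => j.2.some
    let φ : ∀ i j, A i →ₗ[R] B j := fun i j =>
      LinearMap.proj j ∘ₗ e.toLinearMap ∘ₗ LinearMap.single R A i
    let ψ : ∀ j i, B j →ₗ[R] A i := fun j i =>
      LinearMap.proj i ∘ₗ e.symm.toLinearMap ∘ₗ LinearMap.single R B j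
    let P : Matrix F {j // Nonempty (B j ≃ₗ[R] X)} (Module.End R X) := fun i j =>
      a i ∘ₗ ψ j i ∘ₗ (b j).symm
    let Q : Matrix {j // Nonempty (B j ≃ₗ[R] X)} F (Module.End R X) := fun j i =>
      b j ∘ₗ φ i j ∘ₗ (a i).symm
    rw [← Fintype.card_coe]
    refine card_le_of_mul_sub_one_mem_nonunits P Q fun i k => ?_
    obtain ⟨s, hs⟩ := exists_finset_sum_comp_eq e (hAs i)
    let S : Finset J := Finset.univ.map (Function.Embedding.subtype fun j => Nonempty (B j ≃ₗ[R] X))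
    let r : J → Module.End R X := fun j => (a i ∘ₗ ψ j i) ∘ₗ (φ k j ∘ₗ (a k).symm)
    have htot : ∑ j ∈ s ∪ S, r j = (1 : Matrix F F (Module.End R X)) i k := by
      ext x
      have := congrArg (a i) (LinearMap.congr_fun (hs (s ∪ S) Finset.subset_union_left k)
        ((a k).symm x))
      have h1 : (∑ j ∈ s ∪ S, r j) x = a i ((Pi.single (k : I) ((a k).symm x) : ∀ i, A i) i) := by
        simpa [LinearMap.sum_apply, map_sum, r, φ, ψ] using this
      rw [h1]
      by_cases hik : i = k
      · subst hik
        simp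
      · have hne : ((i : {i // Nonempty (A i ≃ₗ[R] X)}) : I) ≠ k := fun h =>
          hik (Subtype.ext (Subtype.ext h))
        simp [Matrix.one_apply_ne hik, Pi.single_eq_of_ne hne]
    have hPQ : (P * Q) i k = ∑ j ∈ S, r j := by
      rw [Matrix.mul_apply, Finset.sum_map]
      refine Finset.sum_congr rfl fun j _ => ?_
      ext x
      simp [P, Q, r]
    have hrest : ∑ j ∈ (s ∪ S) \ S, r j ∈ nonunitsIdeal (Module.End R X) := by
      refine Ideal.sum_mem _ fun j hj hu => (Finset.mem_sdiff.1 hj).2 ?_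
      obtain ⟨f⟩ := (hBi j).nonempty_linearEquiv _ _ hu
      exact Finset.mem_map.2 ⟨⟨j, ⟨f.symm⟩⟩, Finset.mem_univ _, rfl⟩
    rw [← mem_nonunitsIdeal, Matrix.sub_apply, hPQ, ← htot,
      ← Finset.sum_sdiff (Finset.subset_union_right (s₁ := s) (s₂ := S)), sub_add_cancel_right]
    exact neg_mem hrest
  have hfinI : Finite {i // Nonempty (A i ≃ₗ[R] X)} := by
    by_contra hI
    rw [not_finite_iff_infinite] at hI
    obtain ⟨F, hF⟩ := Infinite.exists_subset_card_eq {i // Nonempty (A i ≃ₗ[R] X)}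
      (Fintype.card {j // Nonempty (B j ≃ₗ[R] X)} + 1)
    have := hcard F
    omega
  have := Fintype.ofFinite {i // Nonempty (A i ≃ₗ[R] X)}
  exact Function.Embedding.nonempty_of_card_le (hcard Finset.univ)

end Products

/-- If a direct product of a countable family of slender modules with local endomorphism
rings is isomorphic to a direct product of a countable family of indecomposable slender
modules, then the factors are pairwise isomorphic under a suitable bijection. -/
theorem factors_isomorphic_of_direct_products_isomorphic_slender
    {R : Type*} [Ring R] {I J : Type*} [Countable I] [Countable J]
    (A : I → Type*) (B : J → Type*)
    [∀ i, AddCommGroup (A i)] [∀ i, Module R (A i)]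
    [∀ j, AddCommGroup (B j)] [∀ j, Module R (B j)]
    (hAs : ∀ i, IsSlender R (A i)) (hAl : ∀ i, IsLocalRing (Module.End R (A i)))
    (hBs : ∀ j, IsSlender R (B j)) (hBi : ∀ j, IsIndecomposableModule R (B j))
    (h : Nonempty (((i : I) → A i) ≃ₗ[R] ((j : J) → B j))) :
    ∃ σ : I ≃ J, ∀ i, Nonempty (A i ≃ₗ[R] B (σ i)) := by
  obtain ⟨e⟩ := h
  have hAi : ∀ i, IsIndecomposableModule R (A i) := fun i =>
    have := hAl i
    isIndecomposableModule_of_isLocalRing_end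
  choose τ hτ using fun j => exists_linearEquiv_factor e hAl (hBs j) (hBi j)
  let iso : Setoid I :=
    { r := fun i k => Nonempty (A i ≃ₗ[R] A k)
      iseqv := ⟨fun i => ⟨.refl R _⟩, fun ⟨f⟩ => ⟨f.symm⟩, fun ⟨f⟩ ⟨g⟩ => ⟨f.trans g⟩⟩ }
  let π : I → Quotient iso := Quotient.mk iso
  have hfib : ∀ q, Nonempty ({i // π i = q} ≃ {j // π (τ j) = q}) := by
    intro q
    obtain ⟨k, rfl⟩ := Quotient.exists_rep q
    have := hAl k
    obtain ⟨u⟩ := nonempty_embedding_isomorphic_factors e hAs hBi (A k)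
    obtain ⟨v⟩ := nonempty_embedding_isomorphic_factors e.symm hBs hAi (A k)
    obtain ⟨w⟩ := u.antisymm v
    refine ⟨(Equiv.subtypeEquivRight fun i => Quotient.eq).trans
      (w.trans (Equiv.subtypeEquivRight fun j => ?_))⟩
    obtain ⟨f⟩ := hτ j
    exact Iff.trans ⟨fun ⟨g⟩ => ⟨f.trans g⟩, fun ⟨g⟩ => ⟨f.symm.trans g⟩⟩
      (Quotient.eq (r := iso)).symm
  refine ⟨(Equiv.sigmaFiberEquiv π).symm.trans
    ((Equiv.sigmaCongrRight fun q => (hfib q).some).trans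
      (Equiv.sigmaFiberEquiv fun j => π (τ j))), fun i => ?_⟩
  have hσ := ((hfib (π i)).some ⟨i, rfl⟩).2
  obtain ⟨g⟩ : Nonempty (A (τ ((hfib (π i)).some ⟨i, rfl⟩)) ≃ₗ[R] A i) := Quotient.exact hσ
  obtain ⟨f⟩ := hτ ((hfib (π i)).some ⟨i, rfl⟩)
  exact ⟨g.symm.trans f⟩
end

section
/- Let {A_i : i ∈ I} and {B_j : j ∈ J} be two countable families of abelian groups such that each A_i and each B_j is torsion-free of rank 1 (i.e., nonzero, torsion-free, and embeddable in ℚ) and satisfies pG ≠ G for every prime p (where G is A_i or B_j respectively). If the abelian groups ∏_{i∈I} A_i and ∏_{j∈J} B_j are isomorphic, then there exists a bijection σ : I → J such that A_i ≅ B_{σ(i)} for every i ∈ I. -/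
/-- An abelian group is torsion-free of rank 1 if it is nonzero, torsion-free, and embeds
into `ℚ`. -/
def IsTorsionFreeRankOne (G : Type*) [AddCommGroup G] : Prop :=
  (∃ x : G, x ≠ 0) ∧
    (∀ (n : ℤ) (g : G), n • g = 0 → n = 0 ∨ g = 0) ∧
    ∃ f : G →+ ℚ, Function.Injective f

section RankOne

variable {A B : Type*} [AddCommGroup A] [AddCommGroup B]

theorem zsmul_right_injective_of_injective_rat {a : A →+ ℚ} (ha : Function.Injective a) {n : ℤ}
    (hn : n ≠ 0) {x y : A} (h : n • x = n • y) : x = y := by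
  apply ha
  have h' := congrArg a h
  rw [map_zsmul, map_zsmul, zsmul_eq_mul, zsmul_eq_mul] at h'
  exact mul_left_cancel₀ (Int.cast_ne_zero.mpr hn) h'

/-- Any element of a rank-one group is a reduced fraction of any nonzero element. -/
theorem exists_coprime_zsmul_eq_zsmul {a : A →+ ℚ} (ha : Function.Injective a) {x : A}
    (hx : x ≠ 0) (y : A) : ∃ n m : ℤ, n ≠ 0 ∧ IsCoprime n m ∧ n • y = m • x := by
  have hax : a x ≠ 0 := (map_ne_zero_iff a ha).mpr hx
  refine ⟨(a y / a x).den, (a y / a x).num, by exact_mod_cast (a y / a x).den_nz, ?_, ?_⟩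
  · exact (Rat.isCoprime_num_den _).symm
  · apply ha
    rw [map_zsmul, map_zsmul, zsmul_eq_mul, zsmul_eq_mul]
    have h := Rat.num_div_den (a y / a x)
    have hd : ((a y / a x).den : ℚ) ≠ 0 := by exact_mod_cast (a y / a x).den_nz
    rw [div_eq_div_iff hd hax] at h
    push_cast
    linarith

/-- A homomorphism out of a rank-one group is multiplication by a rational number. -/
theorem exists_rat_mul_of_addMonoidHom {a : A →+ ℚ} (ha : Function.Injective a) (f : A →+ ℚ) :
    ∃ q : ℚ, ∀ x, f x = q * a x := by
  by_cases h : ∃ x : A, x ≠ 0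
  · obtain ⟨x₀, hx₀⟩ := h
    have hax : a x₀ ≠ 0 := (map_ne_zero_iff a ha).mpr hx₀
    refine ⟨f x₀ / a x₀, fun x => ?_⟩
    obtain ⟨n, m, hn, -, hnm⟩ := exists_coprime_zsmul_eq_zsmul ha hx₀ x
    have hn' : (n : ℚ) ≠ 0 := Int.cast_ne_zero.mpr hn
    have h1 := congrArg a hnm
    have h2 := congrArg f hnm
    simp only [map_zsmul, zsmul_eq_mul] at h1 h2
    apply mul_left_cancel₀ hn'
    rw [h2, mul_left_comm, h1]
    field_simp
  · push Not at h
    exact ⟨0, fun x => by simp [h x]⟩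

theorem eq_zero_of_forall_prime_pow_dvd {a : A →+ ℚ} (ha : Function.Injective a) {p : ℕ}
    (hp : p.Prime) (hpA : ¬Function.Surjective (fun g : A => p • g)) {x : A}
    (hx : ∀ k : ℕ, ∃ z : A, (p ^ k : ℤ) • z = x) : x = 0 := by
  by_contra hx0
  apply hpA
  intro y
  have hp' : Prime (p : ℤ) := Nat.prime_iff_prime_int.mp hp
  obtain ⟨n, m, hn, -, hnm⟩ := exists_coprime_zsmul_eq_zsmul ha hx0 y
  obtain ⟨n', hn', hpn'⟩ := (Int.finiteMultiplicity_iff.mpr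
    ⟨by simpa using hp.ne_one, hn⟩ : FiniteMultiplicity (p : ℤ) n).exists_eq_pow_mul_and_not_dvd
  generalize multiplicity (p : ℤ) n = k at hn'
  subst hn'
  obtain ⟨z, rfl⟩ := hx (k + 1)
  have hz : n' • y = (p : ℤ) • m • z := by
    apply zsmul_right_injective_of_injective_rat ha (pow_ne_zero k hp'.ne_zero)
    rw [← mul_smul, hnm]
    module
  obtain ⟨u, v, huv⟩ := hp'.irreducible.coprime_iff_not_dvd.mpr hpn'
  refine ⟨u • y + v • m • z, ?_⟩
  change p • (u • y + v • m • z) = y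
  calc p • (u • y + v • m • z) = (u * p) • y + v • (p : ℤ) • m • z := by module
    _ = (u * p + v * n') • y := by rw [← hz]; module
    _ = y := by rw [huv, one_smul]

/-- In a rank-one group, an element outside `pA` generates `A` modulo `pA`. -/
theorem exists_eq_zsmul_add_prime_zsmul {a : A →+ ℚ} (ha : Function.Injective a) {p : ℤ}
    (hp : Prime p) {y : A} (hy : ∀ z : A, p • z ≠ y) (x : A) :
    ∃ (k : ℤ) (z : A), x = k • y + p • z := by
  have hy0 : y ≠ 0 := fun h => hy 0 (by simp [h])
  obtain ⟨r, s, -, ⟨c, d, hcd⟩, hrs⟩ := exists_coprime_zsmul_eq_zsmul ha hy0 x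
  have hpr : ¬p ∣ r := by
    rintro ⟨t, rfl⟩
    apply hy (c • t • y + d • t • x)
    calc p • (c • t • y + d • t • x) = (c * (p * t)) • y + d • ((p * t) • x) := by module
      _ = (c * (p * t) + d * s) • y := by rw [hrs]; module
      _ = y := by rw [hcd, one_smul]
  obtain ⟨u, v, huv⟩ := (hp.irreducible.coprime_iff_not_dvd.mpr hpr)
  refine ⟨v * s, u • x, ?_⟩
  calc x = (u * p + v * r) • x := by rw [huv, one_smul]
    _ = v • (r • x) + p • u • x := by module
    _ = _ := by rw [hrs]; module

theorem exists_addMonoidHom_zsmul_eq {b : B →+ ℚ} (hb : Function.Injective b) {n : ℤ}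
    (hn : n ≠ 0) (f : A →+ B) (hf : ∀ x, ∃ y, n • y = f x) :
    ∃ g : A →+ B, ∀ x, n • g x = f x := by
  choose g hg using hf
  refine ⟨AddMonoidHom.mk' g fun x y => ?_, hg⟩
  apply zsmul_right_injective_of_injective_rat hb hn
  rw [smul_add, hg, hg, hg, map_add]

theorem nonempty_addEquiv_of_comp_eq_zsmul {a : A →+ ℚ} (ha : Function.Injective a) {b : B →+ ℚ}
    (hb : Function.Injective b) (m : ℕ) (hm : m ≠ 0) :
    ∀ (α : A →+ B) (β : B →+ A), (∀ x, β (α x) = (m : ℤ) • x) →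
      (∀ y, α (β y) = (m : ℤ) • y) → Nonempty (A ≃+ B) := by
  induction m using Nat.strong_induction_on with
  | _ m ih =>
  intro α β hβα hαβ
  by_cases hm1 : m = 1
  · subst hm1
    exact ⟨{ α with
      invFun := β
      left_inv := fun x => by simpa using hβα x
      right_inv := fun y => by simpa using hαβ y }⟩
  obtain ⟨p, hp, k, rfl⟩ := Nat.exists_prime_and_dvd hm1
  have hk : k ≠ 0 := by rintro rfl; simp at hm
  have hlt : k < p * k := lt_mul_of_one_lt_left (Nat.pos_of_ne_zero hk) hp.one_lt
  have hp' : Prime (p : ℤ) := Nat.prime_iff_prime_int.mp hp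
  push_cast at hβα hαβ
  by_cases hdiv : ∀ y, ∃ z, (p : ℤ) • z = β y
  · obtain ⟨β', hβ'⟩ := exists_addMonoidHom_zsmul_eq ha hp'.ne_zero β hdiv
    refine ih k hlt hk α β' (fun x => ?_) (fun y => ?_)
    · apply zsmul_right_injective_of_injective_rat ha hp'.ne_zero
      rw [hβ', hβα, mul_smul]
    · apply zsmul_right_injective_of_injective_rat hb hp'.ne_zero
      rw [← map_zsmul, hβ', hαβ, mul_smul]
  · push Not at hdiv
    obtain ⟨y, hy⟩ := hdiv
    have hα : ∀ x, ∃ z, (p : ℤ) • z = α x := fun x => by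
      obtain ⟨c, z, rfl⟩ := exists_eq_zsmul_add_prime_zsmul ha hp' hy x
      refine ⟨c • (k : ℤ) • y + α z, ?_⟩
      rw [map_add, map_zsmul, map_zsmul, hαβ]
      module
    obtain ⟨α', hα'⟩ := exists_addMonoidHom_zsmul_eq hb hp'.ne_zero α hα
    refine ih k hlt hk α' β (fun x => ?_) (fun y => ?_)
    · apply zsmul_right_injective_of_injective_rat ha hp'.ne_zero
      rw [← map_zsmul, hα', hβα, mul_smul]
    · apply zsmul_right_injective_of_injective_rat hb hp'.ne_zero
      rw [hα', hαβ, mul_smul]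

/-- Rank-one groups with homomorphisms in both directions having nonzero composite are
isomorphic. -/
theorem nonempty_addEquiv_of_ne_zero {a : A →+ ℚ} (ha : Function.Injective a) {b : B →+ ℚ}
    (hb : Function.Injective b) {α : A →+ B} {β : B →+ A} (hα : α ≠ 0) (hβ : β ≠ 0) :
    Nonempty (A ≃+ B) := by
  obtain ⟨q, hq⟩ := exists_rat_mul_of_addMonoidHom ha (b.comp α)
  obtain ⟨r, hr⟩ := exists_rat_mul_of_addMonoidHom hb (a.comp β)
  simp only [AddMonoidHom.comp_apply] at hq hr
  have hq0 : q ≠ 0 := by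
    rintro rfl
    exact hα (AddMonoidHom.ext fun x => hb (by simp [hq]))
  have hr0 : r ≠ 0 := by
    rintro rfl
    exact hβ (AddMonoidHom.ext fun x => ha (by simp [hr]))
  have hrq : r * q ≠ 0 := mul_ne_zero hr0 hq0
  have hnum : (r * q).num ≠ 0 := Rat.num_ne_zero.mpr hrq
  have hden : ((r * q).den : ℚ) * (r * q) = (r * q).num := Rat.den_mul_eq_num _
  have hsign : (((r * q).num.sign : ℤ) : ℚ) * (r * q).num = ((r * q).num.natAbs : ℕ) := by
    rw [← Int.cast_mul, Int.sign_mul_self_eq_natAbs, Int.cast_natCast]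
  refine nonempty_addEquiv_of_comp_eq_zsmul ha hb (r * q).num.natAbs (by simpa using hrq) α
    (((r * q).num.sign * (r * q).den : ℤ) • β) (fun x => ha ?_) (fun y => hb ?_)
  · simp only [AddMonoidHom.smul_apply, map_zsmul, zsmul_eq_mul, hr, hq, Int.cast_mul,
      Int.cast_natCast]
    rw [← hsign, ← hden]
    ring
  · simp only [AddMonoidHom.smul_apply, map_zsmul, zsmul_eq_mul, hr, hq, Int.cast_mul,
      Int.cast_natCast]
    rw [← hsign, ← hden]
    ring

theorem nonempty_addEquiv_of_ne_zero_of_addEquiv {A' : Type*} [AddCommGroup A'] {a : A →+ ℚ}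
    (ha : Function.Injective a) {b : B →+ ℚ} (hb : Function.Injective b) {α : A →+ B}
    {β : B →+ A'} (hα : α ≠ 0) (hβ : β ≠ 0) (e : A' ≃+ A) : Nonempty (A ≃+ B) := by
  refine nonempty_addEquiv_of_ne_zero ha hb hα (β := e.toAddMonoidHom.comp β) fun h => hβ ?_
  ext y
  exact (map_eq_zero_iff e e.injective).mp (DFunLike.congr_fun h y)

end RankOne

section Slender

variable {G : Type*} [AddCommGroup G]

theorem exists_single_eq_zero_of_injective_rat {g : G →+ ℚ} (hg : Function.Injective g)
    (hG : ∀ x : G, (∀ k : ℕ, ∃ z : G, (2 ^ k : ℤ) • z = x) → x = 0)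
    (f : (ℕ → ℤ) →+ G) : ∃ n, f (Pi.single n 1) = 0 := by
  by_contra! hne
  have hstep : ∀ n k : ℕ, ∃ l, k < l ∧
      ∀ z : G, (2 ^ l : ℤ) • z ≠ (2 ^ k : ℤ) • f (Pi.single n 1) := by
    intro n k
    by_contra! h
    apply hne n
    apply zsmul_right_injective_of_injective_rat hg (pow_ne_zero k (two_ne_zero' ℤ))
    rw [smul_zero]
    refine hG _ fun l => ?_
    obtain ⟨z, hz⟩ := h (k + l + 1) (by omega)
    refine ⟨(2 ^ (k + 1) : ℤ) • z, ?_⟩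
    rw [← hz, ← mul_smul]
    congr 1
    ring
  choose next hlt hnext using hstep
  let e : ℕ → ℕ := fun n => Nat.rec 0 (fun n k => next n k) n
  have he : StrictMono e := strictMono_nat_of_lt_succ fun n => hlt n (e n)
  have hnext' : ∀ n, ∀ z : G, (2 ^ e (n + 1) : ℤ) • z ≠ (2 ^ e n : ℤ) • f (Pi.single n 1) :=
    fun n => hnext n (e n)
  let c : (ℕ → Bool) → ℕ → ℤ := fun s n => 2 ^ e n * (s n).toNat
  have hnot : ¬Function.Injective fun s => f (c s) := fun h => by
    have : Countable (ℕ → Bool) := (hg.comp h).countable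
    have h1 := Cardinal.mk_le_aleph0_iff.mpr this
    have h2 : Cardinal.mk (ℕ → Bool) = Cardinal.continuum := by
      rw [← Cardinal.two_power_aleph0]
      simp only [Cardinal.mk_pi, Cardinal.mk_bool, Cardinal.prod_const, Cardinal.lift_ofNat,
        Cardinal.mk_nat, Cardinal.lift_aleph0]
    rw [h2] at h1
    exact Cardinal.aleph0_lt_continuum.not_ge h1
  obtain ⟨s, t, hst, hne'⟩ := Function.not_injective_iff.mp hnot
  have hex : ∃ n, s n ≠ t n := Function.ne_iff.mp hne'
  classical
  let N := Nat.find hex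
  have hN : s N ≠ t N := Nat.find_spec hex
  have hlow : ∀ n < N, s n = t n := fun n hn => not_not.mp (Nat.find_min hex hn)
  let w : ℕ → ℤ := fun n =>
    if n ≤ N then 0 else 2 ^ (e n - e (N + 1)) * ((s n).toNat - (t n).toNat)
  let δ : ℤ := (s N).toNat - (t N).toNat
  have hδ : δ * δ = 1 := by
    simp only [δ]
    revert hN
    cases s N <;> cases t N <;> simp
  have hdecomp : c s - c t = (2 ^ e N * δ) • Pi.single N 1 + (2 ^ e (N + 1) : ℤ) • w := by
    ext n
    simp only [c, w, Pi.sub_apply, Pi.add_apply, Pi.smul_apply, smul_eq_mul]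
    rcases lt_trichotomy n N with h | rfl | h
    · simp [h.ne, h.le, hlow n h]
    · simp [δ]
      ring
    · have hle : e (N + 1) ≤ e n := he.monotone h
      rw [if_neg (by omega), Pi.single_eq_of_ne h.ne', ← mul_assoc, ← pow_add,
        Nat.add_sub_cancel' hle]
      ring
  have hf := congrArg f hdecomp
  rw [map_sub, sub_eq_zero.mpr hst, map_add, map_zsmul, map_zsmul] at hf
  apply hnext' N (-(δ • f w))
  calc (2 ^ e (N + 1) : ℤ) • (-(δ • f w)) = -(δ • (2 ^ e (N + 1) : ℤ) • f w) := by module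
    _ = -(δ • -((2 ^ e N * δ) • f (Pi.single N 1))) := by rw [eq_neg_of_add_eq_zero_right hf.symm]
    _ = ((δ * δ) * 2 ^ e N) • f (Pi.single N 1) := by module
    _ = _ := by rw [hδ, one_mul]

variable {I : Type*} [DecidableEq I] {A : I → Type*} [∀ i, AddCommGroup (A i)]

theorem AddMonoidHom.pi_eq_sum_single (f : ((i : I) → A i) →+ G) (s : Finset I)
    (x : (i : I) → A i) (hx : ∀ i ∉ s, x i = 0) : f x = ∑ i ∈ s, f (Pi.single i (x i)) := by
  rw [← map_sum]
  congr 1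
  ext i
  rw [Finset.sum_apply, Finset.sum_pi_single]
  split_ifs with h
  · rfl
  · exact hx i h

theorem map_prime_pow_smul_eq_zero {p : ℕ}
    (hG : ∀ x : G, (∀ k : ℕ, ∃ z : G, (p ^ k : ℤ) • z = x) → x = 0)
    (f : ((i : I) → A i) →+ G) (hf : ∀ i a, f (Pi.single i a) = 0) {ν : I → ℕ}
    (hν : Function.Injective ν) (u : (i : I) → A i) :
    f (fun i => (p ^ ν i : ℤ) • u i) = 0 := by
  refine hG _ fun k => ⟨f fun i => if ν i < k then 0 else (p ^ (ν i - k) : ℤ) • u i, ?_⟩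
  have hfin : {i | ν i < k}.Finite := (Set.finite_lt_nat k).preimage hν.injOn
  have h0 : f (fun i => if ν i < k then (p ^ ν i : ℤ) • u i else 0) = 0 := by
    rw [f.pi_eq_sum_single hfin.toFinset]
    · exact Finset.sum_eq_zero fun i _ => hf _ _
    · intro i hi
      exact if_neg (by simpa using hi)
  rw [← map_zsmul, ← add_zero (f _), ← h0, ← map_add]
  congr 1
  ext i
  simp only [Pi.add_apply, Pi.smul_apply]
  split_ifs with h
  · simp
  · rw [add_zero, ← mul_smul, ← pow_add, Nat.add_sub_cancel' (not_lt.mp h)]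

/-- A homomorphism from a countable product to a group without nonzero infinitely `2`-divisible
or infinitely `3`-divisible elements is determined by its restrictions to the factors. -/
theorem eq_zero_of_forall_single_eq_zero [Countable I]
    (hG₂ : ∀ x : G, (∀ k : ℕ, ∃ z : G, (2 ^ k : ℤ) • z = x) → x = 0)
    (hG₃ : ∀ x : G, (∀ k : ℕ, ∃ z : G, (3 ^ k : ℤ) • z = x) → x = 0)
    (f : ((i : I) → A i) →+ G) (hf : ∀ i a, f (Pi.single i a) = 0) : f = 0 := by
  obtain ⟨ν, hν⟩ := exists_injective_nat I
  ext x
  have hcop : ∀ n : ℕ, IsCoprime (2 ^ n : ℤ) (3 ^ n) := fun n =>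
    IsCoprime.pow (by norm_num [Int.isCoprime_iff_gcd_eq_one])
  choose u v huv using hcop
  have h2 := map_prime_pow_smul_eq_zero (p := 2) hG₂ f hf hν fun i => u (ν i) • x i
  have h3 := map_prime_pow_smul_eq_zero (p := 3) hG₃ f hf hν fun i => v (ν i) • x i
  have hx : x = (fun i => ((2 : ℕ) ^ ν i : ℤ) • u (ν i) • x i) +
      fun i => ((3 : ℕ) ^ ν i : ℤ) • v (ν i) • x i := by
    ext i
    rw [Pi.add_apply, ← mul_smul, ← mul_smul, ← add_smul, mul_comm, mul_comm _ (v _)]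
    push_cast
    rw [huv, one_smul]
  rw [hx, map_add, h2, h3, add_zero, AddMonoidHom.zero_apply]

theorem finite_setOf_exists_single_ne_zero {g : G →+ ℚ} (hg : Function.Injective g)
    (hG₂ : ∀ x : G, (∀ k : ℕ, ∃ z : G, (2 ^ k : ℤ) • z = x) → x = 0)
    (f : ((i : I) → A i) →+ G) : {i | ∃ a, f (Pi.single i a) ≠ 0}.Finite := by
  by_contra hinf
  let e := Set.Infinite.natEmbedding _ hinf
  have he : Function.Injective fun n => (e n : I) := Subtype.val_injective.comp e.injective
  choose! y hy using fun i (hi : i ∈ {i | ∃ a, f (Pi.single i a) ≠ 0}) => hi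
  let φ : (ℕ → ℤ) →+ ((i : I) → A i) := AddMonoidHom.mk'
    (fun c i => Function.ExtendByZero.linearMap ℤ (fun n => (e n : I)) c i • y i) fun c d => by
      ext i
      simp only [map_add, Pi.add_apply, add_smul]
  obtain ⟨n, hn⟩ := exists_single_eq_zero_of_injective_rat hg hG₂ (f.comp φ)
  apply hy (e n) (e n).2
  refine Eq.trans ?_ hn
  rw [AddMonoidHom.comp_apply]
  congr 1
  ext i
  change _ = Function.extend (fun n => (e n : I)) (Pi.single n (1 : ℤ)) 0 i • y i
  by_cases h : ∃ m, (e m : I) = i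
  · obtain ⟨m, rfl⟩ := h
    rw [he.extend_apply (g := Pi.single n (1 : ℤ))]
    by_cases hmn : m = n
    · subst hmn
      simp
    · rw [Pi.single_eq_of_ne hmn, Pi.single_eq_of_ne (he.ne hmn), zero_smul]
  · rw [Function.extend_apply' _ _ _ h, Pi.single_eq_of_ne fun h' => h ⟨n, h'.symm⟩,
      Pi.zero_apply, zero_smul]

theorem exists_finset_eq_sum_single [Countable I] {g : G →+ ℚ} (hg : Function.Injective g)
    (hG : ∀ p : ℕ, p.Prime → ¬Function.Surjective (fun x : G => p • x))
    (f : ((i : I) → A i) →+ G) : ∃ s : Finset I, (∀ i ∉ s, ∀ a, f (Pi.single i a) = 0) ∧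
      ∀ x, f x = ∑ i ∈ s, f (Pi.single i (x i)) := by
  have hG₂ : ∀ x : G, (∀ k : ℕ, ∃ z : G, (2 ^ k : ℤ) • z = x) → x = 0 := fun x hx =>
    eq_zero_of_forall_prime_pow_dvd hg Nat.prime_two (hG 2 Nat.prime_two) hx
  have hG₃ : ∀ x : G, (∀ k : ℕ, ∃ z : G, (3 ^ k : ℤ) • z = x) → x = 0 := fun x hx =>
    eq_zero_of_forall_prime_pow_dvd hg Nat.prime_three (hG 3 Nat.prime_three) hx
  let s := (finite_setOf_exists_single_ne_zero hg hG₂ f).toFinset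
  have hs : ∀ i ∉ s, ∀ a, f (Pi.single i a) = 0 := fun i hi a => by
    by_contra h
    exact hi (by simpa [s] using ⟨a, h⟩)
  refine ⟨s, hs, fun x => ?_⟩
  let f' : ((i : I) → A i) →+ G :=
    ∑ i ∈ s, f.comp ((AddMonoidHom.single A i).comp (Pi.evalAddMonoidHom A i))
  have hf' : ∀ x, f' x = ∑ i ∈ s, f (Pi.single i (x i)) := fun x => by
    simp [f']
  have h0 : f - f' = 0 := by
    refine eq_zero_of_forall_single_eq_zero hG₂ hG₃ _ fun i a => ?_
    rw [AddMonoidHom.sub_apply, hf', sub_eq_zero]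
    by_cases hi : i ∈ s
    · rw [Finset.sum_eq_single i, Pi.single_eq_same]
      · intro j _ hj
        rw [Pi.single_eq_of_ne hj, Pi.single_zero, map_zero]
      · exact fun h => absurd hi h
    · rw [hs i hi, Finset.sum_eq_zero]
      intro j hj
      rw [Pi.single_eq_of_ne (ne_of_mem_of_not_mem hj hi), Pi.single_zero, map_zero]
  rw [← hf', ← sub_eq_zero, ← AddMonoidHom.sub_apply, h0, AddMonoidHom.zero_apply]

end Slender

section Fiber

variable {I J : Type*} {A : I → Type*} {B : J → Type*}
  [∀ i, AddCommGroup (A i)] [∀ j, AddCommGroup (B j)]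

/-- If the identity of a family of rank-one factors `A i`, `P i`, only factors through the `B j`
with `Q j`, and there are finitely many of the latter, then there are at most as many of the
former. -/
theorem finite_and_card_le_of_pi_addEquiv [Countable J]
    {a : (i : I) → A i →+ ℚ} (ha : ∀ i, Function.Injective (a i))
    {b : (j : J) → B j →+ ℚ} (hb : ∀ j, Function.Injective (b j))
    (hA0 : ∀ i, ∃ x : A i, x ≠ 0) (hB0 : ∀ j, ∃ y : B j, y ≠ 0)
    (hAp : ∀ i, ∀ p : ℕ, p.Prime → ¬Function.Surjective (fun g : A i => p • g))
    (E : ((i : I) → A i) ≃+ ((j : J) → B j)) (P : I → Prop) (Q : J → Prop)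
    (hPQ : ∀ i i' j, P i → P i' → ¬Q j → ∀ (f : A i →+ B j) (g : B j →+ A i'), f = 0 ∨ g = 0)
    [Finite {j // Q j}] :
    Finite {i // P i} ∧ Nat.card {i // P i} ≤ Nat.card {j // Q j} := by
  classical
  have := Fintype.ofFinite {j // Q j}
  let F : (i : I) → (j : J) → A i →+ B j := fun i j =>
    ((Pi.evalAddMonoidHom B j).comp E.toAddMonoidHom).comp (AddMonoidHom.single A i)
  let Gt : (i : I) → ((j : J) → B j) →+ A i := fun i =>
    (Pi.evalAddMonoidHom A i).comp E.symm.toAddMonoidHom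
  let H : (j : J) → (i : I) → B j →+ A i := fun j i =>
    (Gt i).comp (AddMonoidHom.single B j)
  choose q hq using fun i j => exists_rat_mul_of_addMonoidHom (ha i) ((b j).comp (F i j))
  choose r hr using fun j i => exists_rat_mul_of_addMonoidHom (hb j) ((a i).comp (H j i))
  simp only [AddMonoidHom.comp_apply] at hq hr
  have hq0 : ∀ i j, F i j = 0 → q i j = 0 := fun i j h => by
    obtain ⟨x, hx⟩ := hA0 i
    have h' := hq i j x
    rw [h, AddMonoidHom.zero_apply, map_zero] at h'
    exact (mul_eq_zero.mp h'.symm).resolve_right ((map_ne_zero_iff _ (ha i)).mpr hx)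
  have hr0 : ∀ j i, H j i = 0 → r j i = 0 := fun j i h => by
    obtain ⟨y, hy⟩ := hB0 j
    have h' := hr j i y
    rw [h, AddMonoidHom.zero_apply, map_zero] at h'
    exact (mul_eq_zero.mp h'.symm).resolve_right ((map_ne_zero_iff _ (hb j)).mpr hy)
  have hsum : ∀ i i', P i → P i' →
      ∑ j : {j // Q j}, r j i' * q i j = if i = i' then 1 else 0 := by
    intro i i' hi hi'
    obtain ⟨s, hs, hsx⟩ := exists_finset_eq_sum_single (ha i') (hAp i') (Gt i')
    have hrs : ∀ j ∉ s, r j i' = 0 := fun j hj =>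
      hr0 j i' (AddMonoidHom.ext fun y => hs j hj y)
    have hQ : ∀ j, ¬Q j → r j i' * q i j = 0 := fun j hj => by
      rcases hPQ i i' j hi hi' hj (F i j) (H j i') with h | h
      · rw [hq0 i j h, mul_zero]
      · rw [hr0 j i' h, zero_mul]
    have h1 : ∑ j : {j // Q j}, r j i' * q i j = ∑ j ∈ s, r j i' * q i j := by
      let T : Finset J := Finset.univ.map (Function.Embedding.subtype Q)
      have hT : ∑ j : {j // Q j}, r j i' * q i j = ∑ j ∈ T, r j i' * q i j := by
        simp [T, Finset.sum_map]
      rw [hT]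
      trans ∑ j ∈ T ∪ s, r j i' * q i j
      · refine Finset.sum_subset Finset.subset_union_left fun j _ hj => ?_
        exact hQ j fun h => hj (by simpa [T] using h)
      · refine (Finset.sum_subset Finset.subset_union_right fun j _ hj => ?_).symm
        rw [hrs j hj, zero_mul]
    rw [h1]
    obtain ⟨x, hx⟩ := hA0 i
    have hax : a i x ≠ 0 := (map_ne_zero_iff _ (ha i)).mpr hx
    apply mul_right_cancel₀ hax
    have h2 : a i' (Gt i' (E (Pi.single i x))) = (∑ j ∈ s, r j i' * q i j) * a i x := by
      rw [hsx, map_sum, Finset.sum_mul]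
      refine Finset.sum_congr rfl fun j _ => ?_
      rw [mul_assoc, ← hq, ← hr]
      rfl
    rw [← h2]
    have h3 : Gt i' (E (Pi.single i x)) = (Pi.single i x : (i : I) → A i) i' := by
      simp [Gt]
    rw [h3]
    split_ifs with h
    · subst h
      simp
    · rw [Pi.single_eq_of_ne (Ne.symm h), map_zero, zero_mul]
  let v : {i // P i} → {j // Q j} → ℚ := fun i j => q i j
  let W : ({j // Q j} → ℚ) →ₗ[ℚ] ({i // P i} → ℚ) :=
    LinearMap.pi fun i => ∑ j : {j // Q j}, r j i • LinearMap.proj j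
  have hv : LinearIndependent ℚ v := by
    apply LinearIndependent.of_comp W
    convert Pi.linearIndependent_single_one {i // P i} ℚ using 1
    ext i i'
    simp only [Function.comp_apply, W, v, LinearMap.pi_apply, LinearMap.sum_apply,
      LinearMap.smul_apply, LinearMap.proj_apply, smul_eq_mul]
    rw [hsum i i' i.2 i'.2, Pi.single_apply]
    simp only [Subtype.ext_iff, eq_comm]
  have hfin : Finite {i // P i} := hv.finite
  have := Fintype.ofFinite {i // P i}
  refine ⟨hfin, ?_⟩
  simpa [Nat.card_eq_fintype_card] using hv.fintype_card_le_finrank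

end Fiber

/-- For countable families of torsion-free rank-1 abelian groups `G` with `pG ≠ G` for
every prime `p`, an isomorphism of the direct products yields a bijection under which the
factors are pairwise isomorphic. -/
theorem factors_isomorphic_of_direct_products_isomorphic_rank_one
    {I J : Type*} [Countable I] [Countable J]
    (A : I → Type*) (B : J → Type*)
    [∀ i, AddCommGroup (A i)] [∀ j, AddCommGroup (B j)]
    (hA1 : ∀ i, IsTorsionFreeRankOne (A i))
    (hAp : ∀ i, ∀ p : ℕ, p.Prime → ¬Function.Surjective (fun g : A i => p • g))
    (hB1 : ∀ j, IsTorsionFreeRankOne (B j))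
    (hBp : ∀ j, ∀ p : ℕ, p.Prime → ¬Function.Surjective (fun g : B j => p • g))
    (h : Nonempty (((i : I) → A i) ≃+ ((j : J) → B j))) :
    ∃ σ : I ≃ J, ∀ i, Nonempty (A i ≃+ B (σ i)) := by
  obtain ⟨E⟩ := h
  choose hA0 _ a ha using hA1
  choose hB0 _ b hb using hB1
  let S : Setoid (AddSubgroup ℚ) :=
    { r := fun H K => Nonempty (H ≃+ K)
      iseqv := ⟨fun _ => ⟨AddEquiv.refl _⟩, fun ⟨e⟩ => ⟨e.symm⟩, fun ⟨e⟩ ⟨e'⟩ => ⟨e.trans e'⟩⟩ }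
  let cA : I → Quotient S := fun i => ⟦(a i).range⟧
  let cB : J → Quotient S := fun j => ⟦(b j).range⟧
  let eA := fun i => AddMonoidHom.ofInjective (ha i)
  let eB := fun j => AddMonoidHom.ofInjective (hb j)
  have hAB : ∀ i j, cA i = cB j ↔ Nonempty (A i ≃+ B j) := fun i j =>
    Quotient.eq.trans ⟨fun ⟨e⟩ => ⟨(eA i).trans (e.trans (eB j).symm)⟩,
      fun ⟨e⟩ => ⟨(eA i).symm.trans (e.trans (eB j))⟩⟩
  have key : ∀ t, Nonempty ({i // cA i = t} ≃ {j // cB j = t}) := by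
    intro t
    have h1 : Finite {j // cB j = t} →
        Finite {i // cA i = t} ∧ Nat.card {i // cA i = t} ≤ Nat.card {j // cB j = t} := fun _ => by
      refine finite_and_card_le_of_pi_addEquiv ha hb hA0 hB0 hAp E _ _ ?_
      intro i i' j hi hi' hj f g
      by_contra! hfg
      obtain ⟨e⟩ := Quotient.exact (hi'.trans hi.symm)
      exact hj <| ((hAB i j).mpr <| nonempty_addEquiv_of_ne_zero_of_addEquiv (ha i) (hb j)
        hfg.1 hfg.2 ((eA i').trans (e.trans (eA i).symm))).symm.trans hi
    have h2 : Finite {i // cA i = t} →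
        Finite {j // cB j = t} ∧ Nat.card {j // cB j = t} ≤ Nat.card {i // cA i = t} := fun _ => by
      refine finite_and_card_le_of_pi_addEquiv hb ha hB0 hA0 hBp E.symm _ _ ?_
      intro j j' i hj hj' hi f g
      by_contra! hfg
      obtain ⟨e⟩ := Quotient.exact (hj'.trans hj.symm)
      obtain ⟨e'⟩ := nonempty_addEquiv_of_ne_zero_of_addEquiv (hb j) (ha i)
        hfg.1 hfg.2 ((eB j').trans (e.trans (eB j).symm))
      exact hi <| ((hAB i j).mpr ⟨e'.symm⟩).trans hj
    by_cases hfin : Finite {j // cB j = t}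
    · have := (h1 hfin).1
      exact Finite.card_eq.mp (le_antisymm (h1 hfin).2 (h2 this).2)
    · have : Infinite {j // cB j = t} := not_finite_iff_infinite.mp hfin
      have : Infinite {i // cA i = t} :=
        not_finite_iff_infinite.mp fun h => hfin (h2 h).1
      exact nonempty_equiv_of_countable
  refine ⟨Equiv.ofFiberEquiv fun t => (key t).some, fun i => (hAB _ _).mp ?_⟩
  exact (Equiv.ofFiberEquiv_map _ i).symm
end
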